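/- arXiv:2212.07974 — 2 statements merged into one kernel-verified Lean document; each statement's English description precedes it below -/
import Mathlib

section
/- For every α ∈ (0,1), every γ > 0, every β ∈ ℝ and every x ≥ 0, one has the fractional integration identity φ(-α, β, -x) = (1/Γ(γ)) · ∫_x^∞ φ(-α, β − αγ, -t) · (t − x)^{γ−1} dt, the integral being absolutely convergent. -/
open MeasureTheory

/-- The Wright function `φ(ρ, β, x) = ∑ x^n / (n! Γ(β + ρ n))`. -/
noncomputable def wright (ρ β x : ℝ) : ℝ :=
  ∑' n : ℕ, x ^ n / ((n.factorial : ℝ) * Real.Gamma (β + ρ * n))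

/-!
The reciprocal Gamma function has a Hankel representation on every contour `s = (1 + iy) ^ p`,
`1 < p < 3`, namely `1 / Γ(z) = (2πi)⁻¹ ∫ e ^ s s ^ (-z) ds`. For `p = 1` the contour is a vertical
line and the formula is Fourier inversion of the density `t ^ (z - 1) e ^ (-t)`; for `Re z` large
the integral does not depend on `p`, because its derivative in `p` integrates an exact
differential, and the functional equation of `Γ` then reaches every `z`. For `1 < p < 3` the factor
`e ^ s` decays like `exp (-c |y| ^ p)`, so the Wright series may be summed under the integral:
`φ(-α, β, -x) = (2πi)⁻¹ ∫ e ^ s s ^ (-β) e ^ (-x s ^ α) ds`.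

If moreover `p α < 1`, then `Re s ^ α` is bounded below by a positive constant on the contour, so by
Fubini the fractional integral acts on `e ^ (-t s ^ α)` alone, where it is a Gamma integral
producing the factor `s ^ (-αγ)`; this factor turns `s ^ (-(β - αγ))` into `s ^ (-β)`.
-/

section PowersInRightHalfPlane

open Complex Set
open scoped Real

theorem cos_mul_le_cos_rpow {θ p : ℝ} (hθ : |θ| ≤ π / 2) (hp : p ∈ Icc 1 3) :
    Real.cos (θ * p) ≤ Real.cos θ ^ p := by
  wlog h : 0 ≤ θ generalizing θ
  · simpa using this (θ := -θ) (by simpa using hθ) (by linarith)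
  obtain ⟨hp1, hp3⟩ := hp
  rw [abs_of_nonneg h] at hθ
  have hcos : 0 ≤ Real.cos θ := Real.cos_nonneg_of_neg_pi_div_two_le_of_le (by linarith) hθ
  rcases le_or_gt (θ * p) (π / 2) with hθp | hθp
  · have hconcave : p⁻¹ * Real.cos (θ * p) + (1 - p⁻¹) * Real.cos 0 ≤ Real.cos θ := by
      have hθ_eq : p⁻¹ * (θ * p) + (1 - p⁻¹) * 0 = θ := by field_simp; ring
      have hmem : θ * p ∈ Icc (-(π / 2)) (π / 2) := ⟨by nlinarith [Real.pi_pos], hθp⟩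
      have hmem₀ : (0 : ℝ) ∈ Icc (-(π / 2)) (π / 2) := by constructor <;> linarith
      have := strictConcaveOn_cos_Icc.concaveOn.2 hmem hmem₀ (inv_nonneg.2 (by linarith : 0 ≤ p))
        (sub_nonneg.2 (inv_le_one_of_one_le₀ hp1)) (add_sub_cancel _ _)
      simpa only [smul_eq_mul, hθ_eq] using this
    calc Real.cos (θ * p)
        = 1 + p * (p⁻¹ * Real.cos (θ * p) + (1 - p⁻¹) * Real.cos 0 - 1) := by
          rw [Real.cos_zero]; field_simp; ring
      _ ≤ 1 + p * (Real.cos θ - 1) := by gcongr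
      _ ≤ (1 + (Real.cos θ - 1)) ^ p := one_add_mul_self_le_rpow_one_add (by linarith) hp1
      _ = Real.cos θ ^ p := by rw [add_sub_cancel]
  · exact (Real.cos_nonpos_of_pi_div_two_le_of_le hθp.le (by nlinarith)).trans
      (Real.rpow_nonneg hcos p)

theorem re_cpow_le_re_rpow {w : ℂ} {p : ℝ} (hw : 0 ≤ w.re) (hp : p ∈ Icc 1 3) :
    (w ^ (p : ℂ)).re ≤ w.re ^ p := by
  have harg := abs_arg_le_pi_div_two_iff.2 hw
  calc (w ^ (p : ℂ)).re = ‖w‖ ^ p * Real.cos (arg w * p) := cpow_ofReal_re w p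
    _ ≤ ‖w‖ ^ p * Real.cos (arg w) ^ p := by gcongr; exact cos_mul_le_cos_rpow harg hp
    _ = w.re ^ p := by
      rw [← Real.mul_rpow (norm_nonneg w), norm_mul_cos_arg]
      exact Real.cos_nonneg_of_neg_pi_div_two_le_of_le (abs_le.1 harg).1 (abs_le.1 harg).2

theorem cos_mul_le_cos_add_mul_cos {θ p : ℝ} (hθ : |θ| ≤ π / 2) (hp : 0 ≤ p) :
    Real.cos (θ * p) ≤ Real.cos (π / 2 * p) + π / 2 * p * Real.cos θ := by
  have hdist : Real.cos (|θ| * p) - Real.cos (π / 2 * p) ≤ (π / 2 - |θ|) * p :=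
    calc Real.cos (|θ| * p) - Real.cos (π / 2 * p)
        ≤ |(|θ| * p) - π / 2 * p| := (le_abs_self _).trans (Real.abs_cos_sub_cos_le _ _)
      _ = (π / 2 - |θ|) * p := by
        rw [← sub_mul, abs_mul, abs_of_nonneg hp, abs_sub_comm, abs_of_nonneg (sub_nonneg.2 hθ)]
  have hjordan : π / 2 - |θ| ≤ π / 2 * Real.cos θ := by
    have := Real.one_sub_mul_le_cos (abs_nonneg θ) hθ
    rw [Real.cos_abs] at this
    calc π / 2 - |θ| = π / 2 * (1 - 2 / π * |θ|) := by field_simp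
      _ ≤ π / 2 * Real.cos θ := by gcongr
  have heven : Real.cos (θ * p) = Real.cos (|θ| * p) := by
    rw [← Real.cos_abs, abs_mul, abs_of_nonneg hp]
  nlinarith

theorem re_cpow_le {w : ℂ} {p : ℝ} (hw : 0 < w.re) (hp : 0 ≤ p) :
    (w ^ (p : ℂ)).re ≤ Real.cos (π / 2 * p) * ‖w‖ ^ p + π / 2 * p * w.re * ‖w‖ ^ (p - 1) := by
  have hw0 : w ≠ 0 := fun h => by simp [h] at hw
  calc (w ^ (p : ℂ)).re = ‖w‖ ^ p * Real.cos (arg w * p) := cpow_ofReal_re w p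
    _ ≤ ‖w‖ ^ p * (Real.cos (π / 2 * p) + π / 2 * p * (w.re / ‖w‖)) := by
      rw [← cos_arg hw0]
      gcongr
      exact cos_mul_le_cos_add_mul_cos (abs_arg_le_pi_div_two_iff.2 hw.le) hp
    _ = _ := by rw [Real.rpow_sub_one (norm_ne_zero_iff.2 hw0)]; ring

theorem cos_mul_norm_rpow_le_re_cpow {w : ℂ} {p : ℝ} (hw : 0 ≤ w.re) (hp : p ∈ Icc 0 2) :
    Real.cos (π / 2 * p) * ‖w‖ ^ p ≤ (w ^ (p : ℂ)).re := by
  have harg := abs_arg_le_pi_div_two_iff.2 hw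
  rw [cpow_ofReal_re, mul_comm, ← Real.cos_abs (arg w * p), abs_mul, abs_of_nonneg hp.1]
  gcongr
  exact Real.cos_le_cos_of_nonneg_of_le_pi (mul_nonneg (abs_nonneg _) hp.1)
    (by nlinarith [hp.2, Real.pi_pos]) (mul_le_mul_of_nonneg_right harg hp.1)

theorem norm_cpow_le_exp_mul_norm_rpow (w a : ℂ) :
    ‖w ^ a‖ ≤ Real.exp (π * |a.im|) * ‖w‖ ^ a.re := by
  refine (norm_cpow_le w a).trans ?_
  rw [div_eq_mul_inv, ← Real.exp_neg, mul_comm]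
  gcongr
  exact (neg_le_abs _).trans (by rw [abs_mul]; gcongr; exact abs_arg_le_pi w)

theorem norm_log_le_pi_mul_norm {w : ℂ} (hw : 1 ≤ ‖w‖) : ‖log w‖ ≤ π * ‖w‖ :=
  calc ‖log w‖ ≤ |(log w).re| + |(log w).im| := norm_le_abs_re_add_abs_im _
    _ = Real.log ‖w‖ + |arg w| := by rw [log_re, log_im, abs_of_nonneg (Real.log_nonneg hw)]
    _ ≤ (‖w‖ - 1) + π :=
      add_le_add (Real.log_le_sub_one_of_pos (by linarith)) (abs_arg_le_pi w)
    _ ≤ π * ‖w‖ := by nlinarith [Real.pi_gt_three]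

end PowersInRightHalfPlane

section VerticalLine

open Complex Set Filter Asymptotics
open scoped Real Topology

/-- The vertical line `Re w = 1` in its standard parametrization; the Hankel contours below are its
images under the powers `w ↦ w ^ p`. -/
def lineReOne (y : ℝ) : ℂ := 1 + y * I

@[simp] theorem lineReOne_re (y : ℝ) : (lineReOne y).re = 1 := by simp [lineReOne]

theorem one_le_norm_lineReOne (y : ℝ) : 1 ≤ ‖lineReOne y‖ := by
  simpa using re_le_norm (lineReOne y)

theorem norm_lineReOne_pos (y : ℝ) : 0 < ‖lineReOne y‖ :=
  zero_lt_one.trans_le (one_le_norm_lineReOne y)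

theorem lineReOne_ne_zero (y : ℝ) : lineReOne y ≠ 0 := norm_pos_iff.1 (norm_lineReOne_pos y)

theorem lineReOne_mem_slitPlane (y : ℝ) : lineReOne y ∈ slitPlane := Or.inl (by simp)

theorem hasDerivAt_lineReOne (y : ℝ) : HasDerivAt lineReOne I y :=
  (((hasDerivAt_id y).ofReal_comp.mul_const I).const_add 1).congr_deriv (by simp)

theorem continuous_lineReOne : Continuous lineReOne := by unfold lineReOne; fun_prop

theorem sq_norm_lineReOne (y : ℝ) : ‖lineReOne y‖ ^ 2 = 1 + ‖y‖ ^ 2 := by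
  rw [Complex.sq_norm, normSq_apply]
  simp [lineReOne, sq]

theorem tendsto_norm_lineReOne_cocompact :
    Tendsto (fun y => ‖lineReOne y‖) (cocompact ℝ) atTop := by
  refine tendsto_atTop_mono (fun y => ?_) (tendsto_norm_cocompact_atTop (E := ℝ))
  simpa [lineReOne] using abs_im_le_norm (lineReOne y)

theorem integrable_norm_lineReOne_rpow {r : ℝ} (hr : r < -1) :
    Integrable fun y => ‖lineReOne y‖ ^ r := by
  have := integrable_rpow_neg_one_add_norm_sq (E := ℝ) (μ := volume) (r := -r)
    (by rw [Module.finrank_self, Nat.cast_one]; linarith)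
  refine this.congr (Eventually.of_forall fun y => ?_)
  simp only [neg_neg, ← sq_norm_lineReOne]
  rw [← Real.rpow_natCast_mul (norm_nonneg _)]
  congr 1
  push_cast; ring

theorem continuous_lineReOne_cpow_const (a : ℂ) : Continuous fun y => lineReOne y ^ a :=
  continuous_lineReOne.cpow continuous_const lineReOne_mem_slitPlane

theorem integrable_lineReOne_cpow {a : ℂ} (ha : a.re < -1) :
    Integrable fun y => lineReOne y ^ a :=
  ((integrable_norm_lineReOne_rpow ha).const_mul (Real.exp (π * |a.im|))).mono'
    (continuous_lineReOne_cpow_const a).aestronglyMeasurable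
    (.of_forall fun y => norm_cpow_le_exp_mul_norm_rpow (lineReOne y) a)

theorem tendsto_rpow_mul_exp_atTop_nhds_zero {a b c d p q r : ℝ} (hc : c < 0) (hp : 0 < p)
    (hq : q < p) (hr : r < p) :
    Tendsto (fun R : ℝ => R ^ a * Real.exp (c * R ^ p + d * R ^ r + b * R ^ q)) atTop (𝓝 0) := by
  have hlower {s : ℝ} (hs : s < p) : Tendsto (fun R : ℝ => R ^ (s - p)) atTop (𝓝 0) := by
    simpa using tendsto_rpow_neg_atTop (sub_pos.2 hs)
  have hlog : Tendsto (fun R : ℝ => Real.log R / R ^ p) atTop (𝓝 0) :=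
    (isLittleO_log_rpow_atTop hp).tendsto_div_nhds_zero
  have hbracket : Tendsto
      (fun R : ℝ => c + d * R ^ (r - p) + b * R ^ (q - p) + a * (Real.log R / R ^ p))
      atTop (𝓝 c) := by
    simpa using (((hlower hr).const_mul d).const_add c).add ((hlower hq).const_mul b) |>.add
      (hlog.const_mul a)
  refine (Real.tendsto_exp_atBot.comp ((tendsto_rpow_atTop hp).atTop_mul_neg hc hbracket)).congr' ?_
  filter_upwards [eventually_gt_atTop 0] with R hR
  rw [Function.comp_apply, Real.rpow_def_of_pos hR a, ← Real.exp_add, Real.rpow_sub hR,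
    Real.rpow_sub hR]
  congr 1
  field_simp
  ring

theorem integrable_rpow_mul_exp_re_cpow_lineReOne {p : ℝ} (hp : p ∈ Ioo 1 3) (a b : ℝ) {q : ℝ}
    (hq : q < p) :
    Integrable fun y => ‖lineReOne y‖ ^ a *
      Real.exp ((lineReOne y ^ (p : ℂ)).re + b * ‖lineReOne y‖ ^ q) := by
  obtain ⟨hp1, hp3⟩ := hp
  have hcos : Real.cos (π / 2 * p) < 0 :=
    Real.cos_neg_of_pi_div_two_lt_of_lt (by nlinarith [Real.pi_pos]) (by nlinarith [Real.pi_pos])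
  have hcont : Continuous fun y => ‖lineReOne y‖ ^ a *
      Real.exp ((lineReOne y ^ (p : ℂ)).re + b * ‖lineReOne y‖ ^ q) := by
    have hrpow (s : ℝ) : Continuous fun y => ‖lineReOne y‖ ^ s :=
      continuous_lineReOne.norm.rpow_const fun y => Or.inl (norm_lineReOne_pos y).ne'
    exact (hrpow a).mul (Real.continuous_exp.comp
      ((continuous_re.comp (continuous_lineReOne_cpow_const p)).add ((hrpow q).const_mul b)))
  have hdecay := (tendsto_rpow_mul_exp_atTop_nhds_zero (a := a + 2) (b := b) (d := π / 2 * p) hcos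
    (by linarith) hq (sub_one_lt p)).comp tendsto_norm_lineReOne_cocompact
  have hdom : Integrable fun y => ‖lineReOne y‖ ^ (-2 : ℝ) :=
    integrable_norm_lineReOne_rpow (by norm_num)
  refine hcont.locallyIntegrable.integrable_of_isBigO_cocompact ?_ (hdom.integrableAtFilter _)
  refine IsBigO.of_bound 1 ?_
  filter_upwards [hdecay.eventually_le_const zero_lt_one] with y hy
  have hpos := norm_lineReOne_pos y
  have hre := re_cpow_le (w := lineReOne y) (p := p) (by simp) (by linarith)
  rw [lineReOne_re, mul_one] at hre
  rw [one_mul, Real.norm_of_nonneg (by positivity), Real.norm_of_nonneg (by positivity),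
    Real.rpow_neg hpos.le, ← one_div, le_div_iff₀ (by positivity)]
  refine le_trans ?_ hy
  simp only [Function.comp_apply]
  rw [Real.rpow_add hpos, mul_right_comm]
  gcongr

end VerticalLine

section GammaIntegral

open Complex Set Filter
open scoped Real Topology FourierTransform

theorem norm_cpow_mul_exp_neg_mul {t : ℝ} (ht : 0 < t) (a u : ℂ) :
    ‖(t : ℂ) ^ a * exp (-(u * t))‖ = t ^ a.re * Real.exp (-(u.re * t)) := by
  rw [norm_mul, norm_cpow_eq_rpow_re_of_pos ht, norm_exp, neg_re, re_mul_ofReal]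

theorem aestronglyMeasurable_cpow_mul_exp_neg_mul (a u : ℂ) :
    AEStronglyMeasurable (fun t : ℝ => (t : ℂ) ^ a * exp (-(u * t))) (volume.restrict (Ioi 0)) := by
  fun_prop

theorem integrableOn_cpow_mul_exp_neg_mul_Ioi {a u : ℂ} (ha : -1 < a.re) (hu : 0 < u.re) :
    IntegrableOn (fun t : ℝ => (t : ℂ) ^ a * exp (-(u * t))) (Ioi 0) := by
  have hreal := integrableOn_rpow_mul_exp_neg_mul_rpow ha one_pos hu
  refine hreal.mono' (aestronglyMeasurable_cpow_mul_exp_neg_mul a u) ?_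
  filter_upwards [self_mem_ae_restrict measurableSet_Ioi] with t ht
  rw [norm_cpow_mul_exp_neg_mul ht, Real.rpow_one, neg_mul]

theorem differentiableOn_integral_cpow_mul_exp_neg_mul_Ioi {a : ℂ} (ha : -1 < a.re) :
    DifferentiableOn ℂ (fun u => ∫ t : ℝ in Ioi 0, (t : ℂ) ^ a * exp (-(u * t)))
      {u | 0 < u.re} := by
  intro u hu
  have hnhds : {v : ℂ | u.re / 2 < v.re} ∈ 𝓝 u :=
    (isOpen_lt continuous_const continuous_re).mem_nhds (half_lt_self (show 0 < u.re from hu))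
  have hbound := integrableOn_rpow_mul_exp_neg_mul_rpow (s := a.re + 1) (by linarith) one_pos
    (half_pos hu)
  refine (hasDerivAt_integral_of_dominated_loc_of_deriv_le hnhds
    (F' := fun v t => (t : ℂ) ^ a * (exp (-(v * t)) * -t))
    (.of_forall fun v => aestronglyMeasurable_cpow_mul_exp_neg_mul a v)
    (integrableOn_cpow_mul_exp_neg_mul_Ioi ha hu) (by fun_prop) ?_ hbound
    ?_).2.differentiableAt.differentiableWithinAt
  · filter_upwards [self_mem_ae_restrict measurableSet_Ioi] with t (ht : 0 < t) v hv
    rw [← mul_assoc, norm_mul, norm_cpow_mul_exp_neg_mul ht, norm_neg, norm_real,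
      Real.norm_of_nonneg ht.le, Real.rpow_add_one ht.ne', Real.rpow_one, mul_right_comm, neg_mul]
    gcongr
  · refine .of_forall fun t v _ => ?_
    simpa using (((hasDerivAt_id v).mul_const (t : ℂ)).neg.cexp).const_mul ((t : ℂ) ^ a)

theorem integral_cpow_mul_exp_neg_mul_complex_Ioi {a u : ℂ} (ha : 0 < a.re) (hu : 0 < u.re) :
    ∫ t : ℝ in Ioi 0, (t : ℂ) ^ (a - 1) * exp (-(u * t)) = Gamma a * u ^ (-a) := by
  have hopen : IsOpen {u : ℂ | 0 < u.re} := isOpen_lt continuous_const continuous_re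
  have hleft := (differentiableOn_integral_cpow_mul_exp_neg_mul_Ioi (a := a - 1)
    (by simpa using ha)).analyticOnNhd hopen
  have hright : AnalyticOnNhd ℂ (fun u => Gamma a * u ^ (-a)) {u | 0 < u.re} :=
    DifferentiableOn.analyticOnNhd (fun v hv => ((differentiableAt_id.cpow_const
      (Or.inl hv)).const_mul _).differentiableWithinAt) hopen
  have hreal : ∀ r : ℝ, 0 < r →
      ∫ t : ℝ in Ioi 0, (t : ℂ) ^ (a - 1) * exp (-(r * t)) = Gamma a * (r : ℂ) ^ (-a) := by
    intro r hr
    rw [Complex.integral_cpow_mul_exp_neg_mul_Ioi ha hr, mul_comm, one_div, inv_cpow, cpow_neg]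
    rw [arg_ofReal_of_nonneg hr.le]
    exact Real.pi_pos.ne
  have hfreq : ∃ᶠ v in 𝓝[≠] (1 : ℂ),
      ∫ t : ℝ in Ioi 0, (t : ℂ) ^ (a - 1) * exp (-(v * t)) = Gamma a * v ^ (-a) := by
    have hmap : Tendsto ((↑) : ℝ → ℂ) (𝓝[≠] 1) (𝓝[≠] 1) :=
      mod_cast continuous_ofReal.continuousWithinAt.tendsto_nhdsWithin (x := 1)
        (fun r hr => by simpa using hr)
    refine hmap.frequently (Eventually.frequently ?_)
    filter_upwards [nhdsWithin_le_nhds (Ioi_mem_nhds one_pos)] with r hr using hreal r hr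
  exact hleft.eqOn_of_preconnected_of_frequently_eq hright
    (convex_halfSpace_re_gt 0).isPreconnected (by simp) hfreq hu

theorem fourier_indicator_cpow_mul_exp_neg {z : ℂ} (hz : 0 < z.re) (ξ : ℝ) :
    𝓕 ((Ioi 0).indicator fun t : ℝ => (t : ℂ) ^ (z - 1) * exp (-t)) ξ =
      Gamma z * lineReOne (2 * π * ξ) ^ (-z) := by
  rw [Real.fourier_real_eq_integral_exp_smul, ← integral_cpow_mul_exp_neg_mul_complex_Ioi hz
    (by simp), ← integral_indicator measurableSet_Ioi]
  congr 1 with t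
  rw [smul_eq_mul, ← indicator_mul_right (Ioi 0) (fun t : ℝ => exp (↑(-2 * π * t * ξ) * I))]
  refine congrArg (fun g => (Ioi 0).indicator g t) (funext fun t => ?_)
  rw [mul_left_comm, ← exp_add]
  congr 2
  push_cast [lineReOne]
  ring

theorem integrable_indicator_cpow_mul_exp_neg {z : ℂ} (hz : 0 < z.re) :
    Integrable ((Ioi 0).indicator fun t : ℝ => (t : ℂ) ^ (z - 1) * exp (-t)) := by
  refine (integrable_indicator_iff measurableSet_Ioi).2 ?_
  simpa using integrableOn_cpow_mul_exp_neg_mul_Ioi (a := z - 1) (u := 1) (by simpa using hz)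
    (by simp)

theorem continuousAt_indicator_cpow_mul_exp_neg (a : ℂ) {t : ℝ} (ht : 0 < t) :
    ContinuousAt ((Ioi 0).indicator fun t : ℝ => (t : ℂ) ^ a * exp (-t)) t := by
  have heq : (Ioi 0).indicator (fun t : ℝ => (t : ℂ) ^ a * exp (-t)) =ᶠ[𝓝 t]
      fun t => (t : ℂ) ^ a * exp (-t) := by
    filter_upwards [Ioi_mem_nhds ht] with s hs using indicator_of_mem hs _
  refine ContinuousAt.congr (.mul ?_ (by fun_prop)) heq.symm
  exact continuousAt_ofReal_cpow_const t a (Or.inr ht.ne')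

theorem integral_lineReOne_cpow_mul_exp {z : ℂ} (hz : 1 < z.re) :
    ∫ y, lineReOne y ^ (-z) * exp (lineReOne y) = 2 * π / Gamma z := by
  have hz0 : 0 < z.re := zero_lt_one.trans hz
  set f : ℝ → ℂ := (Ioi 0).indicator fun t => (t : ℂ) ^ (z - 1) * exp (-t) with hf
  have h𝓕 : 𝓕 f = fun ξ => Gamma z * lineReOne (2 * π * ξ) ^ (-z) :=
    funext (fourier_indicator_cpow_mul_exp_neg hz0)
  have h𝓕_int : Integrable (𝓕 f) := by
    rw [h𝓕]
    exact ((integrable_lineReOne_cpow (by simpa using hz)).comp_mul_left'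
      Real.two_pi_pos.ne').const_mul _
  have hkernel (ξ : ℝ) : exp (↑(2 * π * inner ℝ ξ (1 : ℝ)) * I) • 𝓕 f ξ =
      exp (-1) * Gamma z * (lineReOne (2 * π * ξ) ^ (-z) * exp (lineReOne (2 * π * ξ))) := by
    have hexp : exp (lineReOne (2 * π * ξ)) = exp 1 * exp (↑(2 * π * inner ℝ ξ (1 : ℝ)) * I) := by
      rw [← exp_add]; simp [lineReOne]
    rw [h𝓕, hexp, exp_neg, smul_eq_mul]
    field_simp
  have hinv : 𝓕⁻ (𝓕 f) 1 = f 1 :=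
    (integrable_indicator_cpow_mul_exp_neg hz0).fourierInv_fourier_eq h𝓕_int
      (continuousAt_indicator_cpow_mul_exp_neg (z - 1) one_pos)
  simp_rw [Real.fourierInv_eq', hkernel] at hinv
  rw [integral_const_mul,
    Measure.integral_comp_mul_left (fun y => lineReOne y ^ (-z) * exp (lineReOne y)), hf,
    indicator_of_mem (mem_Ioi.2 one_pos), abs_of_pos (by positivity), real_smul] at hinv
  push_cast [one_cpow] at hinv
  rw [one_mul, mul_assoc, mul_eq_left₀ (exp_ne_zero _)] at hinv
  have hπ : (π : ℂ) ≠ 0 := ofReal_ne_zero.2 Real.pi_ne_zero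
  field_simp at hinv
  rw [eq_div_iff (Gamma_ne_zero_of_re_pos hz0), mul_comm, hinv]

end GammaIntegral

section ParametricIntegral

open Set

variable {E : Type*} [NormedAddCommGroup E] [NormedSpace ℝ E] [CompleteSpace E]

/- Since `∂ₚ F = ∂ᵧ G`, the derivative of `∫ F p` is `∫ ∂ᵧ (G p) = 0`. -/
theorem integral_eq_integral_of_hasDerivAt_of_hasDerivAt {F F' G : ℝ → ℝ → E} {bound : ℝ → ℝ}
    {a b : ℝ} (hF : ∀ p ∈ uIcc a b, ∀ y, HasDerivAt (fun p => F p y) (F' p y) p)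
    (hG : ∀ p ∈ uIcc a b, ∀ y, HasDerivAt (G p) (F' p y) y)
    (hF' : Continuous (Function.uncurry F'))
    (hF'_le : ∀ p ∈ uIcc a b, ∀ y, ‖F' p y‖ ≤ bound y) (hbound : Integrable bound)
    (hG_int : ∀ p ∈ uIcc a b, Integrable (G p))
    (ha : Integrable (F a)) (hb : Integrable (F b)) :
    ∫ y, F a y = ∫ y, F b y := by
  have hF'_int (p : ℝ) (hp : p ∈ uIcc a b) : Integrable (F' p) :=
    hbound.mono' (hF'.uncurry_left p).aestronglyMeasurable (.of_forall (hF'_le p hp))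
  have hprod : Integrable (Function.uncurry F') ((volume.restrict (uIoc a b)).prod volume) := by
    have : IsFiniteMeasure (volume.restrict (uIoc a b)) := isFiniteMeasure_restrict.2 (by simp)
    refine (hbound.comp_snd (volume.restrict (uIoc a b))).mono' hF'.aestronglyMeasurable ?_
    have hae : ∀ᵐ p ∂volume.restrict (uIoc a b), p ∈ uIcc a b := by
      filter_upwards [ae_restrict_mem measurableSet_uIoc] with p hp using uIoc_subset_uIcc hp
    filter_upwards [Measure.quasiMeasurePreserving_fst.ae hae] with q hq using hF'_le q.1 hq q.2
  have hFTC (y : ℝ) : ∫ p in a..b, F' p y = F b y - F a y :=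
    intervalIntegral.integral_eq_sub_of_hasDerivAt (fun p hp => hF p hp y)
      ((hF'.uncurry_right y).intervalIntegrable a b)
  have hzero : ∫ y, (F b y - F a y) = 0 :=
    calc ∫ y, (F b y - F a y) = ∫ p in a..b, ∫ y, F' p y := by
          simp_rw [← hFTC, ← intervalIntegral_integral_swap hprod]
      _ = ∫ p in a..b, 0 := intervalIntegral.integral_congr fun p hp =>
          integral_eq_zero_of_hasDerivAt_of_integrable (hG p hp) (hF'_int p hp) (hG_int p hp)
      _ = 0 := intervalIntegral.integral_zero
  rw [integral_sub hb ha, sub_eq_zero] at hzero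
  exact hzero.symm

end ParametricIntegral

section HankelIntegral

open Complex Set Filter
open scoped Real Topology

/-- The integrand `e ^ s * s ^ (-z)` of Hankel's formula for `1 / Γ`, pulled back (together with
`ds`) along the change of variable `s = w ^ p`. -/
noncomputable def hankelIntegrand (p z w : ℂ) : ℂ := p * w ^ (p * (1 - z) - 1) * exp (w ^ p)

/-- The common value of `∂ₚ hankelIntegrand p z w` and of the derivative in `w` of
`w ^ (p * (1 - z)) * log w * exp (w ^ p)`. -/
noncomputable def hankelIntegrandDeriv (p z w : ℂ) : ℂ :=
  w ^ (p * (1 - z) - 1) * exp (w ^ p) * (1 + p * (1 - z + w ^ p) * log w)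

theorem hasDerivAt_hankelIntegrand_exponent (p z : ℂ) {w : ℂ} (hw : w ≠ 0) :
    HasDerivAt (fun p => hankelIntegrand p z w) (hankelIntegrandDeriv p z w) p := by
  have hpow := (((hasDerivAt_id p).mul_const (1 - z)).sub_const 1).const_cpow (c := w) (Or.inl hw)
  have hexp := ((hasDerivAt_id p).const_cpow (c := w) (Or.inl hw)).cexp
  refine (((hasDerivAt_id p).mul hpow).mul hexp).congr_deriv ?_
  simp only [hankelIntegrandDeriv, id, Pi.mul_apply]
  ring

theorem hasDerivAt_cpow_mul_log_mul_exp_cpow (p z : ℂ) {w : ℂ} (hw : w ∈ slitPlane) :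
    HasDerivAt (fun w => w ^ (p * (1 - z)) * log w * exp (w ^ p))
      (hankelIntegrandDeriv p z w) w := by
  have hw0 := slitPlane_ne_zero hw
  have hpow (a : ℂ) := (hasDerivAt_id w).cpow_const (c := a) hw
  refine (((hpow (p * (1 - z))).mul ((hasDerivAt_id w).clog hw)).mul (hpow p).cexp).congr_deriv ?_
  simp only [hankelIntegrandDeriv, id, Pi.mul_apply, cpow_sub _ _ hw0, cpow_one]
  field_simp
  ring

theorem continuous_hankelIntegrand_lineReOne (p z : ℂ) :
    Continuous fun y => hankelIntegrand p z (lineReOne y) :=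
  (continuous_const.mul (continuous_lineReOne_cpow_const _)).mul
    (continuous_lineReOne_cpow_const p).cexp

theorem continuous_hankelIntegrandDeriv_lineReOne (z : ℂ) :
    Continuous fun q : ℝ × ℝ => hankelIntegrandDeriv q.1 z (lineReOne q.2) := by
  have hline : Continuous fun q : ℝ × ℝ => lineReOne q.2 := continuous_lineReOne.comp continuous_snd
  have hpow {e : ℝ × ℝ → ℂ} (he : Continuous e) : Continuous fun q => lineReOne q.2 ^ e q :=
    hline.cpow he fun q => lineReOne_mem_slitPlane q.2
  have hlog : Continuous fun q : ℝ × ℝ => log (lineReOne q.2) :=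
    hline.clog fun q => lineReOne_mem_slitPlane q.2
  have hp : Continuous fun q : ℝ × ℝ => (q.1 : ℂ) := by fun_prop
  unfold hankelIntegrandDeriv
  exact ((hpow (by fun_prop)).mul (hpow hp).cexp).mul
    (continuous_const.add ((hp.mul (continuous_const.add (hpow hp))).mul hlog))

theorem norm_exp_lineReOne_cpow_le {p : ℝ} (hp : p ∈ Icc 1 3) (y : ℝ) :
    ‖exp (lineReOne y ^ (p : ℂ))‖ ≤ Real.exp 1 := by
  rw [norm_exp, Real.exp_le_exp]
  simpa using re_cpow_le_re_rpow (w := lineReOne y) (by simp) hp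

theorem norm_lineReOne_cpow_le {a : ℂ} {c m : ℝ} (him : |a.im| ≤ c) (hre : a.re ≤ m) (y : ℝ) :
    ‖lineReOne y ^ a‖ ≤ Real.exp (π * c) * ‖lineReOne y‖ ^ m := by
  have hnorm := one_le_norm_lineReOne y
  refine (norm_cpow_le_exp_mul_norm_rpow _ a).trans ?_
  gcongr

theorem integrable_of_norm_le_mul_norm_lineReOne_rpow {f : ℝ → ℂ} (hf : Continuous f) {C : ℝ}
    (hle : ∀ y, ‖f y‖ ≤ C * ‖lineReOne y‖ ^ (-2 : ℝ)) : Integrable f :=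
  ((integrable_norm_lineReOne_rpow (by norm_num)).const_mul C).mono' hf.aestronglyMeasurable
    (.of_forall hle)

theorem abs_im_mul_one_sub_le {p : ℝ} (hp : p ∈ Icc 1 3) (z : ℂ) :
    |((p : ℂ) * (1 - z)).im| ≤ 3 * |z.im| := by
  rw [im_ofReal_mul, abs_mul, abs_of_nonneg (by linarith [hp.1]), sub_im, one_im, zero_sub, abs_neg]
  gcongr
  exact hp.2

/- At the endpoint `p = 1` the exponential factor is only bounded, so on the closed interval
`[1, 3]` integrability has to come from the power of `w`; this is what `4 ≤ z.re` provides. -/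
theorem integrable_hankelIntegrand_lineReOne_of_four_le_re {p : ℝ} (hp : p ∈ Icc 1 3) {z : ℂ}
    (hz : 4 ≤ z.re) : Integrable fun y => hankelIntegrand p z (lineReOne y) := by
  refine integrable_of_norm_le_mul_norm_lineReOne_rpow
    (C := 3 * Real.exp (π * (3 * |z.im|)) * Real.exp 1)
    (continuous_hankelIntegrand_lineReOne p z) fun y => ?_
  have hpow := norm_lineReOne_cpow_le (a := p * (1 - z) - 1) (m := -2)
    (by simpa using abs_im_mul_one_sub_le hp z)
    (by rw [sub_re, re_ofReal_mul, sub_re, one_re]; nlinarith [hp.1]) y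
  calc ‖hankelIntegrand p z (lineReOne y)‖
      = p * ‖lineReOne y ^ (p * (1 - z) - 1)‖ * ‖exp (lineReOne y ^ (p : ℂ))‖ := by
        rw [hankelIntegrand, norm_mul, norm_mul, norm_real,
          Real.norm_of_nonneg (by linarith [hp.1])]
    _ ≤ 3 * (Real.exp (π * (3 * |z.im|)) * ‖lineReOne y‖ ^ (-2 : ℝ)) * Real.exp 1 := by
        gcongr
        exacts [hp.2, norm_exp_lineReOne_cpow_le hp y]
    _ = _ := by ring

theorem integrable_lineReOne_cpow_mul_log_mul_exp_cpow {p : ℝ} (hp : p ∈ Icc 1 3) {z : ℂ}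
    (hz : 4 ≤ z.re) :
    Integrable fun y => lineReOne y ^ ((p : ℂ) * (1 - z)) * log (lineReOne y) *
      exp (lineReOne y ^ (p : ℂ)) := by
  have hcont : Continuous fun y => lineReOne y ^ ((p : ℂ) * (1 - z)) * log (lineReOne y) *
      exp (lineReOne y ^ (p : ℂ)) :=
    ((continuous_lineReOne_cpow_const _).mul
      (continuous_lineReOne.clog lineReOne_mem_slitPlane)).mul
        (continuous_lineReOne_cpow_const p).cexp
  refine integrable_of_norm_le_mul_norm_lineReOne_rpow
    (C := Real.exp (π * (3 * |z.im|)) * π * Real.exp 1) hcont fun y => ?_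
  have hpow := norm_lineReOne_cpow_le (m := -3) (abs_im_mul_one_sub_le hp z)
    (by rw [re_ofReal_mul, sub_re, one_re]; nlinarith [hp.1]) y
  calc _ = ‖lineReOne y ^ ((p : ℂ) * (1 - z))‖ * ‖log (lineReOne y)‖ *
        ‖exp (lineReOne y ^ (p : ℂ))‖ := by rw [norm_mul, norm_mul]
    _ ≤ (Real.exp (π * (3 * |z.im|)) * ‖lineReOne y‖ ^ (-3 : ℝ)) * (π * ‖lineReOne y‖) *
        Real.exp 1 := by
      gcongr
      exacts [norm_log_le_pi_mul_norm (one_le_norm_lineReOne y), norm_exp_lineReOne_cpow_le hp y]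
    _ = _ := by
      have hstep : ‖lineReOne y‖ ^ (-2 : ℝ) = ‖lineReOne y‖ ^ (-3 : ℝ) * ‖lineReOne y‖ := by
        rw [← Real.rpow_add_one (norm_lineReOne_pos y).ne']; norm_num
      rw [hstep]
      ring

theorem norm_one_add_mul_log_le {p : ℝ} (hp : p ∈ Icc 1 3) (z : ℂ) {w : ℂ} (hw : 1 ≤ ‖w‖) :
    ‖1 + p * (1 - z + w ^ (p : ℂ)) * log w‖ ≤ (1 + 3 * (2 + ‖z‖) * π) * ‖w‖ ^ (p + 1) := by
  have hwp : 1 ≤ ‖w‖ ^ p := Real.one_le_rpow hw (by linarith [hp.1])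
  have hsum : ‖1 - z + w ^ (p : ℂ)‖ ≤ (2 + ‖z‖) * ‖w‖ ^ p :=
    calc ‖1 - z + w ^ (p : ℂ)‖ ≤ ‖(1 : ℂ)‖ + ‖z‖ + ‖w ^ (p : ℂ)‖ :=
          (norm_add_le _ _).trans (by gcongr; exact norm_sub_le _ _)
      _ = 1 + ‖z‖ + ‖w‖ ^ p := by rw [norm_one, norm_cpow_real]
      _ ≤ (2 + ‖z‖) * ‖w‖ ^ p := by nlinarith [norm_nonneg z]
  calc ‖1 + p * (1 - z + w ^ (p : ℂ)) * log w‖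
      ≤ ‖(1 : ℂ)‖ + ‖(p : ℂ)‖ * ‖1 - z + w ^ (p : ℂ)‖ * ‖log w‖ := by
        rw [← norm_mul, ← norm_mul]; exact norm_add_le _ _
    _ ≤ ‖w‖ ^ p * ‖w‖ + 3 * ((2 + ‖z‖) * ‖w‖ ^ p) * (π * ‖w‖) := by
        gcongr
        · rw [norm_one]; exact one_le_mul_of_one_le_of_one_le hwp hw
        · rw [norm_real, Real.norm_of_nonneg (by linarith [hp.1])]; exact hp.2
        · exact norm_log_le_pi_mul_norm hw
    _ = (1 + 3 * (2 + ‖z‖) * π) * ‖w‖ ^ (p + 1) := by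
        rw [Real.rpow_add_one (by linarith)]; ring

theorem norm_hankelIntegrandDeriv_lineReOne_le {p : ℝ} (hp : p ∈ Icc 1 3) {z : ℂ}
    (hz : 4 ≤ z.re) (y : ℝ) :
    ‖hankelIntegrandDeriv p z (lineReOne y)‖ ≤
      Real.exp (π * (3 * |z.im|)) * Real.exp 1 * (1 + 3 * (2 + ‖z‖) * π) *
        ‖lineReOne y‖ ^ (-2 : ℝ) := by
  have hpow := norm_lineReOne_cpow_le (a := p * (1 - z) - 1) (m := -(p + 3))
    (by simpa using abs_im_mul_one_sub_le hp z)
    (by rw [sub_re, re_ofReal_mul, sub_re, one_re]; nlinarith [hp.1]) y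
  have hcombine : ‖lineReOne y‖ ^ (-2 : ℝ) =
      ‖lineReOne y‖ ^ (-(p + 3)) * ‖lineReOne y‖ ^ (p + 1) := by
    rw [← Real.rpow_add (norm_lineReOne_pos y)]; ring_nf
  calc ‖hankelIntegrandDeriv p z (lineReOne y)‖
      ≤ (Real.exp (π * (3 * |z.im|)) * ‖lineReOne y‖ ^ (-(p + 3))) * Real.exp 1 *
          ((1 + 3 * (2 + ‖z‖) * π) * ‖lineReOne y‖ ^ (p + 1)) := by
        rw [hankelIntegrandDeriv, norm_mul, norm_mul]
        gcongr
        exacts [norm_exp_lineReOne_cpow_le hp y,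
          norm_one_add_mul_log_le hp z (one_le_norm_lineReOne y)]
    _ = _ := by rw [hcombine]; ring

theorem integral_hankelIntegrand_lineReOne_of_four_le_re {p : ℝ} (hp : p ∈ Icc 1 3) {z : ℂ}
    (hz : 4 ≤ z.re) : ∫ y, hankelIntegrand p z (lineReOne y) = 2 * π / Gamma z := by
  have hsub : uIcc 1 p ⊆ Icc 1 3 := by
    rw [uIcc_of_le hp.1]; exact Icc_subset_Icc_right hp.2
  have hdeform : ∫ y, hankelIntegrand (1 : ℝ) z (lineReOne y) =
      ∫ y, hankelIntegrand p z (lineReOne y) := by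
    refine integral_eq_integral_of_hasDerivAt_of_hasDerivAt
      (F' := fun p y => hankelIntegrandDeriv p z (lineReOne y))
      (G := fun p y => -I * (lineReOne y ^ ((p : ℂ) * (1 - z)) * log (lineReOne y) *
        exp (lineReOne y ^ (p : ℂ))))
      (fun p _ y => (hasDerivAt_hankelIntegrand_exponent p z (lineReOne_ne_zero y)).comp_ofReal)
      (fun p _ y => ?_) (continuous_hankelIntegrandDeriv_lineReOne z)
      (fun p hp y => norm_hankelIntegrandDeriv_lineReOne_le (hsub hp) hz y)
      ((integrable_norm_lineReOne_rpow (by norm_num)).const_mul _)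
      (fun p hp => (integrable_lineReOne_cpow_mul_log_mul_exp_cpow (hsub hp) hz).const_mul _)
      (integrable_hankelIntegrand_lineReOne_of_four_le_re (by simp) hz)
      (integrable_hankelIntegrand_lineReOne_of_four_le_re hp hz)
    refine (((hasDerivAt_cpow_mul_log_mul_exp_cpow p z (lineReOne_mem_slitPlane y)).comp y
      (hasDerivAt_lineReOne y)).const_mul (-I)).congr_deriv ?_
    linear_combination -hankelIntegrandDeriv p z (lineReOne y) * I_mul_I
  rw [← hdeform, ← integral_lineReOne_cpow_mul_exp (by linarith)]
  simp [hankelIntegrand]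

theorem norm_hankelIntegrand_le {p : ℝ} (hp : 0 ≤ p) (z w : ℂ) :
    ‖hankelIntegrand p z w‖ ≤ p * Real.exp (π * |(p * (1 - z) - 1).im|) *
      (‖w‖ ^ (p * (1 - z) - 1).re * Real.exp (w ^ (p : ℂ)).re) := by
  rw [hankelIntegrand, norm_mul, norm_mul, norm_real, Real.norm_of_nonneg hp, norm_exp, mul_assoc,
    mul_assoc]
  refine mul_le_mul_of_nonneg_left ?_ hp
  rw [← mul_assoc]
  gcongr
  exact norm_cpow_le_exp_mul_norm_rpow w _

theorem integrable_hankelIntegrand_lineReOne_mul {p : ℝ} (hp : p ∈ Ioo 1 3) (z : ℂ) {f : ℝ → ℂ}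
    (hf : AEStronglyMeasurable f) {b q : ℝ} (hq : q < p)
    (hf_le : ∀ y, ‖f y‖ ≤ Real.exp (b * ‖lineReOne y‖ ^ q)) :
    Integrable fun y => hankelIntegrand p z (lineReOne y) * f y := by
  have hdom := (integrable_rpow_mul_exp_re_cpow_lineReOne hp (p * (1 - z) - 1).re b hq).const_mul
    (p * Real.exp (π * |(p * (1 - z) - 1).im|))
  refine hdom.mono' ((continuous_hankelIntegrand_lineReOne p z).aestronglyMeasurable.mul hf)
    (.of_forall fun y => ?_)
  rw [norm_mul, Real.exp_add, ← mul_assoc (‖lineReOne y‖ ^ _), ← mul_assoc]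
  have hp0 : 0 ≤ p := by linarith [hp.1]
  gcongr
  exacts [norm_hankelIntegrand_le hp0 z _, hf_le y]

theorem integrable_hankelIntegrand_lineReOne {p : ℝ} (hp : p ∈ Ioo 1 3) (z : ℂ) :
    Integrable fun y => hankelIntegrand p z (lineReOne y) := by
  simpa using integrable_hankelIntegrand_lineReOne_mul hp z (f := fun _ => 1) (b := 0) (q := 0)
    aestronglyMeasurable_const (by linarith [hp.1]) (by simp)

theorem hasDerivAt_cpow_mul_exp_cpow (p z : ℂ) {w : ℂ} (hw : w ∈ slitPlane) :
    HasDerivAt (fun w => w ^ (-(p * z)) * exp (w ^ p))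
      (hankelIntegrand p z w - z * hankelIntegrand p (z + 1) w) w := by
  have hw0 := slitPlane_ne_zero hw
  have hpow (a : ℂ) := (hasDerivAt_id w).cpow_const (c := a) hw
  refine ((hpow (-(p * z))).mul (hpow p).cexp).congr_deriv ?_
  have hz : p * (1 - z) - 1 = -(p * z) + (p - 1) := by ring
  have hz1 : p * (1 - (z + 1)) - 1 = -(p * z) - 1 := by ring
  simp only [hankelIntegrand, id, hz, hz1, cpow_add _ _ hw0]
  ring

theorem integral_hankelIntegrand_lineReOne_eq_mul {p : ℝ} (hp : p ∈ Ioo 1 3) (z : ℂ) :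
    ∫ y, hankelIntegrand p z (lineReOne y) =
      z * ∫ y, hankelIntegrand p (z + 1) (lineReOne y) := by
  have hp0 : (p : ℂ) ≠ 0 := ofReal_ne_zero.2 (by linarith [hp.1])
  have hprimitive : Integrable fun y =>
      lineReOne y ^ (-(p * z)) * exp (lineReOne y ^ (p : ℂ)) := by
    refine ((integrable_hankelIntegrand_lineReOne hp (z + 1 - 1 / p)).const_mul (1 / p : ℂ)).congr
      (.of_forall fun y => ?_)
    have hexponent : p * (1 - (z + 1 - 1 / p)) - 1 = -(p * z) := by field_simp; ring
    simp only [hankelIntegrand, hexponent]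
    field_simp
  have hint := integrable_hankelIntegrand_lineReOne hp z
  have hint_succ := (integrable_hankelIntegrand_lineReOne hp (z + 1)).const_mul z
  have hzero := integral_eq_zero_of_hasDerivAt_of_integrable
    (fun y => (hasDerivAt_cpow_mul_exp_cpow p z (lineReOne_mem_slitPlane y)).comp y
      (hasDerivAt_lineReOne y)) ((hint.sub hint_succ).mul_const I) hprimitive
  rw [integral_mul_const, integral_sub hint hint_succ, integral_const_mul] at hzero
  exact sub_eq_zero.1 ((mul_eq_zero.1 hzero).resolve_right I_ne_zero)

theorem integral_hankelIntegrand_lineReOne {p : ℝ} (hp : p ∈ Ioo 1 3) (z : ℂ) :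
    ∫ y, hankelIntegrand p z (lineReOne y) = 2 * π / Gamma z := by
  suffices ∀ n : ℕ, ∀ z : ℂ, 4 ≤ z.re + n →
      ∫ y, hankelIntegrand p z (lineReOne y) = 2 * π / Gamma z by
    obtain ⟨n, hn⟩ := exists_nat_ge (4 - z.re)
    exact this n z (by linarith)
  intro n
  induction n with
  | zero =>
    intro z hz
    exact integral_hankelIntegrand_lineReOne_of_four_le_re (Ioo_subset_Icc_self hp)
      (by simpa using hz)
  | succ n ih =>
    intro z hz
    rw [integral_hankelIntegrand_lineReOne_eq_mul hp,
      ih (z + 1) (by push_cast at hz; rw [add_re, one_re]; linarith),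
      div_eq_mul_inv, div_eq_mul_inv, one_div_Gamma_eq_self_mul_one_div_Gamma_add_one z]
    ring

end HankelIntegral

section WrightHankel

open Complex Set Filter
open scoped Real Topology

theorem hasSum_integral_mul_pow_div_factorial {Y : Type*} [MeasurableSpace Y] {μ : Measure Y}
    {f g : Y → ℂ} (hf : AEStronglyMeasurable f μ) (hg : AEStronglyMeasurable g μ)
    (hfg : Integrable (fun y => ‖f y‖ * Real.exp ‖g y‖) μ) :
    HasSum (fun n : ℕ => ∫ y, f y * (g y ^ n / n.factorial) ∂μ) (∫ y, f y * exp (g y) ∂μ) := by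
  have hexp (r : ℝ) : ∑' n : ℕ, r ^ n / n.factorial = Real.exp r := by
    rw [Real.exp_eq_exp_ℝ, NormedSpace.exp_eq_tsum_div]
  refine hasSum_integral_of_dominated_convergence
    (fun n y => ‖f y‖ * (‖g y‖ ^ n / n.factorial))
    (fun n => hf.mul ((hg.pow n).mul_const _)) (fun n => .of_forall fun y => by simp)
    (.of_forall fun y => (Real.summable_pow_div_factorial _).mul_left _) ?_
    (.of_forall fun y => ?_)
  · simpa only [tsum_mul_left, hexp] using hfg
  · rw [exp_eq_exp_ℂ]
    exact (NormedSpace.expSeries_div_hasSum_exp (g y)).mul_left (f y)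

theorem hankelIntegrand_add_mul_natCast (p z ρ : ℂ) (n : ℕ) {w : ℂ} (hw : w ≠ 0) :
    hankelIntegrand p (z + ρ * n) w = hankelIntegrand p z w * (w ^ (-(p * ρ))) ^ n := by
  have hexponent : p * (1 - (z + ρ * n)) - 1 = p * (1 - z) - 1 + -(p * ρ) * n := by ring
  rw [hankelIntegrand, hankelIntegrand, hexponent, cpow_add _ _ hw, cpow_mul_nat]
  ring

theorem integral_hankelIntegrand_mul_pow_div_factorial {p : ℝ} (hp : p ∈ Ioo 1 3) (z ρ x : ℂ)
    (n : ℕ) :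
    ∫ y, hankelIntegrand p z (lineReOne y) * ((x * lineReOne y ^ (-(p * ρ))) ^ n / n.factorial) =
      2 * π * (x ^ n / (n.factorial * Gamma (z + ρ * n))) := by
  have hfactor (y : ℝ) : hankelIntegrand p z (lineReOne y) *
      ((x * lineReOne y ^ (-(p * ρ))) ^ n / n.factorial) =
      x ^ n / n.factorial * hankelIntegrand p (z + ρ * n) (lineReOne y) := by
    rw [hankelIntegrand_add_mul_natCast _ _ _ _ (lineReOne_ne_zero y)]
    ring
  simp_rw [hfactor]
  rw [integral_const_mul, integral_hankelIntegrand_lineReOne hp]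
  ring

theorem integrable_norm_hankelIntegrand_mul_exp_norm {p a : ℝ} (hp : p ∈ Ioo 1 3) (ha : a < p)
    (z x : ℂ) :
    Integrable fun y => ‖hankelIntegrand p z (lineReOne y)‖ *
      Real.exp ‖x * lineReOne y ^ (a : ℂ)‖ := by
  have hcont := continuous_lineReOne_cpow_const (a : ℂ)
  have hle (y : ℝ) : ‖((Real.exp ‖x * lineReOne y ^ (a : ℂ)‖ : ℝ) : ℂ)‖ ≤
      Real.exp (‖x‖ * ‖lineReOne y‖ ^ a) := by
    rw [norm_real, Real.norm_of_nonneg (Real.exp_pos _).le, norm_mul, norm_cpow_real]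
  have hint := integrable_hankelIntegrand_lineReOne_mul hp z
    (f := fun y => Real.exp ‖x * lineReOne y ^ (a : ℂ)‖)
    (Continuous.aestronglyMeasurable (by fun_prop)) ha hle
  refine hint.norm.congr (.of_forall fun y => ?_)
  simp only [norm_mul, norm_real, Real.norm_of_nonneg (Real.exp_pos _).le]

theorem ofReal_wright_eq_integral {p ρ : ℝ} (hp : p ∈ Ioo 1 3) (hρ : -1 < ρ) (β x : ℝ) :
    (wright ρ β x : ℂ) = (2 * π : ℂ)⁻¹ *
      ∫ y, hankelIntegrand p β (lineReOne y) * exp (x * lineReOne y ^ (-(p * ρ : ℂ))) := by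
  have hexponent : ((-(p * ρ) : ℝ) : ℂ) = -(p * ρ) := by push_cast; rfl
  have hdom := integrable_norm_hankelIntegrand_mul_exp_norm hp
    (a := -(p * ρ)) (by nlinarith [hp.1]) β x
  rw [hexponent] at hdom
  have hsum := hasSum_integral_mul_pow_div_factorial
    (continuous_hankelIntegrand_lineReOne p β).aestronglyMeasurable
    (((continuous_lineReOne_cpow_const _).const_mul (x : ℂ)).aestronglyMeasurable) hdom
  have hπ : (2 * π : ℂ) ≠ 0 := mul_ne_zero two_ne_zero (ofReal_ne_zero.2 Real.pi_ne_zero)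
  simp_rw [integral_hankelIntegrand_mul_pow_div_factorial hp] at hsum
  rw [← hsum.tsum_eq, tsum_mul_left, inv_mul_cancel_left₀ hπ, wright, ofReal_tsum]
  push_cast [← Gamma_ofReal]
  rfl

theorem ofReal_wright_neg_neg_eq_integral {p α : ℝ} (hp : p ∈ Ioo 1 3) (hα : α < 1) (β t : ℝ) :
    (wright (-α) β (-t) : ℂ) = (2 * π : ℂ)⁻¹ * ∫ y, hankelIntegrand p β (lineReOne y) *
      exp (-(lineReOne y ^ ((p * α : ℝ) : ℂ) * t)) := by
  rw [ofReal_wright_eq_integral hp (neg_lt_neg hα)]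
  push_cast
  simp only [mul_neg, neg_neg, mul_comm]

theorem integrable_hankelIntegrand_mul_exp_neg {p a : ℝ} (hp : p ∈ Ioo 1 3) (ha : a < p)
    (z x : ℂ) :
    Integrable fun y => hankelIntegrand p z (lineReOne y) *
      exp (-(lineReOne y ^ (a : ℂ) * x)) := by
  have hcont := continuous_lineReOne_cpow_const (a : ℂ)
  refine (integrable_norm_hankelIntegrand_mul_exp_norm hp ha z x).mono'
    ((continuous_hankelIntegrand_lineReOne p z).mul (by fun_prop)).aestronglyMeasurable
    (.of_forall fun y => ?_)
  rw [norm_mul, mul_comm x, ← norm_neg (_ * x)]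
  gcongr
  exact norm_exp_le_exp_norm _

end WrightHankel

section WeylFractionalIntegral

open Complex Set
open scoped Real

theorem integrableOn_comp_add_right_Ioi_iff {E : Type*} [NormedAddCommGroup E] {f : ℝ → E} {x : ℝ} :
    IntegrableOn (fun s => f (s + x)) (Ioi 0) ↔ IntegrableOn f (Ioi x) := by
  have := (measurePreserving_add_right volume x).integrableOn_comp_preimage
    (measurableEmbedding_addRight x) (f := f) (s := Ioi x)
  simpa [Function.comp_def] using this

theorem integral_comp_add_right_Ioi {E : Type*} [NormedAddCommGroup E] [NormedSpace ℝ E] (f : ℝ → E)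
    (x : ℝ) : ∫ s in Ioi 0, f (s + x) = ∫ t in Ioi x, f t := by
  have := (measurePreserving_add_right volume x).setIntegral_preimage_emb
    (measurableEmbedding_addRight x) f (Ioi x)
  simpa using this

theorem exp_neg_mul_add_mul_cpow (u γ : ℂ) (x s : ℝ) :
    exp (-(u * (s + x : ℝ))) * ((s + x - x : ℝ) : ℂ) ^ (γ - 1) =
      exp (-(u * x)) * ((s : ℂ) ^ (γ - 1) * exp (-(u * s))) := by
  rw [add_sub_cancel_right, mul_left_comm, ← exp_add, mul_comm]
  push_cast
  ring_nf

theorem integrableOn_exp_neg_mul_mul_sub_cpow_Ioi {u γ : ℂ} (hu : 0 < u.re) (hγ : 0 < γ.re)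
    (x : ℝ) :
    IntegrableOn (fun t : ℝ => exp (-(u * t)) * ((t - x : ℝ) : ℂ) ^ (γ - 1)) (Ioi x) := by
  rw [← integrableOn_comp_add_right_Ioi_iff]
  simp only [exp_neg_mul_add_mul_cpow]
  exact (integrableOn_cpow_mul_exp_neg_mul_Ioi (by simpa using hγ) hu).const_mul _

theorem integral_exp_neg_mul_mul_sub_cpow_Ioi {u γ : ℂ} (hu : 0 < u.re) (hγ : 0 < γ.re) (x : ℝ) :
    ∫ t : ℝ in Ioi x, exp (-(u * t)) * ((t - x : ℝ) : ℂ) ^ (γ - 1) =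
      Gamma γ * (u ^ (-γ) * exp (-(u * x))) := by
  rw [← integral_comp_add_right_Ioi]
  simp only [exp_neg_mul_add_mul_cpow]
  rw [integral_const_mul, integral_cpow_mul_exp_neg_mul_complex_Ioi hγ hu]
  ring

variable {Y : Type*} [MeasurableSpace Y] {μ : Measure Y} {f u : Y → ℂ} {κ : ℝ} {γ : ℂ} {x : ℝ}

theorem integrable_prod_mul_exp_neg_mul_mul_sub_cpow
    (hf : Integrable (fun y => f y * exp (-(u y * x))) μ) (hu : Measurable u)
    (hκ : 0 < κ) (hκu : ∀ y, κ ≤ (u y).re) (hγ : 0 < γ.re) :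
    Integrable (fun q : Y × ℝ => f q.1 * (exp (-(u q.1 * q.2)) * ((q.2 - x : ℝ) : ℂ) ^ (γ - 1)))
      (μ.prod (volume.restrict (Ioi x))) := by
  have hsplit (q : Y × ℝ) : f q.1 * (exp (-(u q.1 * q.2)) * ((q.2 - x : ℝ) : ℂ) ^ (γ - 1)) =
      f q.1 * exp (-(u q.1 * x)) *
        (exp (-(u q.1 * (q.2 - x : ℝ))) * ((q.2 - x : ℝ) : ℂ) ^ (γ - 1)) := by
    rw [mul_assoc (f q.1), ← mul_assoc (exp (-(u q.1 * x))), ← exp_add]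
    push_cast
    ring_nf
  have hweight := (integrableOn_exp_neg_mul_mul_sub_cpow_Ioi (u := κ) hκ hγ x).norm
  have hdom := hf.norm.mul_prod (hweight.const_mul (Real.exp (κ * x)))
  simp_rw [hsplit]
  refine hdom.mono' (hf.aestronglyMeasurable.comp_fst.mul (by fun_prop)) ?_
  have hmem : ∀ᵐ t ∂volume.restrict (Ioi x), t ∈ Ioi x := self_mem_ae_restrict measurableSet_Ioi
  filter_upwards [Measure.quasiMeasurePreserving_snd.ae hmem] with q hq
  have hexp : ‖exp (-(u q.1 * (q.2 - x : ℝ)))‖ ≤ Real.exp (κ * x) * ‖exp (-(κ * q.2))‖ := by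
    have := mul_le_mul_of_nonneg_right (hκu q.1) (sub_nonneg.2 (mem_Ioi.1 hq).le)
    rw [norm_exp, norm_exp, ← Real.exp_add, Real.exp_le_exp, neg_re, neg_re, re_mul_ofReal,
      re_mul_ofReal, ofReal_re]
    linarith
  rw [norm_mul _ (exp _ * _), norm_mul (exp _) (_ ^ _), norm_mul (exp _) (_ ^ _),
    ← mul_assoc (Real.exp _)]
  gcongr

theorem integrableOn_integral_exp_neg_mul_mul_sub_cpow_Ioi [SFinite μ]
    (hf : Integrable (fun y => f y * exp (-(u y * x))) μ) (hu : Measurable u)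
    (hκ : 0 < κ) (hκu : ∀ y, κ ≤ (u y).re) (hγ : 0 < γ.re) :
    IntegrableOn (fun t : ℝ => (∫ y, f y * exp (-(u y * t)) ∂μ) * ((t - x : ℝ) : ℂ) ^ (γ - 1))
      (Ioi x) := by
  have hprod := integrable_prod_mul_exp_neg_mul_mul_sub_cpow hf hu hκ hκu hγ
  simp only [← integral_mul_const, mul_assoc]
  exact hprod.integral_prod_right

theorem integral_integral_exp_neg_mul_mul_sub_cpow_Ioi [SFinite μ]
    (hf : Integrable (fun y => f y * exp (-(u y * x))) μ) (hu : Measurable u)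
    (hκ : 0 < κ) (hκu : ∀ y, κ ≤ (u y).re) (hγ : 0 < γ.re) :
    ∫ t : ℝ in Ioi x, (∫ y, f y * exp (-(u y * t)) ∂μ) * ((t - x : ℝ) : ℂ) ^ (γ - 1) =
      Gamma γ * ∫ y, f y * u y ^ (-γ) * exp (-(u y * x)) ∂μ := by
  have hprod := integrable_prod_mul_exp_neg_mul_mul_sub_cpow hf hu hκ hκu hγ
  calc ∫ t : ℝ in Ioi x, (∫ y, f y * exp (-(u y * t)) ∂μ) * ((t - x : ℝ) : ℂ) ^ (γ - 1)
      = ∫ t : ℝ in Ioi x, ∫ y, f y * (exp (-(u y * t)) * ((t - x : ℝ) : ℂ) ^ (γ - 1)) ∂μ := by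
        simp only [← integral_mul_const, mul_assoc]
    _ = ∫ y, f y * (Gamma γ * (u y ^ (-γ) * exp (-(u y * x)))) ∂μ := by
        rw [← integral_integral_swap hprod]
        congr 1 with y
        rw [integral_const_mul, integral_exp_neg_mul_mul_sub_cpow_Ioi (hκ.trans_le (hκu y)) hγ]
    _ = Gamma γ * ∫ y, f y * u y ^ (-γ) * exp (-(u y * x)) ∂μ := by
        rw [← integral_const_mul]
        congr 1 with y
        ring

end WeylFractionalIntegral

section WrightFractionalIntegral

open Complex Set
open scoped Real

theorem cpow_ofReal_cpow {w : ℂ} (hw : 0 < w.re) {a : ℝ} (ha : |a| ≤ 2) (c : ℂ) :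
    (w ^ (a : ℂ)) ^ c = w ^ (a * c) := by
  have harg : |arg w * a| < π := by
    rw [abs_mul]
    nlinarith [abs_arg_lt_pi_div_two_iff.2 (Or.inl hw), abs_nonneg a, abs_nonneg (arg w)]
  rw [abs_lt, ← log_im, ← im_mul_ofReal] at harg
  exact (cpow_mul c harg.1 harg.2.le).symm

theorem hankelIntegrand_mul_cpow_cpow_neg (p z γ : ℂ) {a : ℝ} (ha : |a| ≤ 2) {w : ℂ}
    (hw : 0 < w.re) {α : ℂ} (haα : (a : ℂ) = p * α) :
    hankelIntegrand p (z - α * γ) w * (w ^ (a : ℂ)) ^ (-γ) = hankelIntegrand p z w := by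
  have hw0 : w ≠ 0 := fun h => by simp [h] at hw
  have hexponent : p * (1 - z) - 1 = p * (1 - (z - α * γ)) - 1 + a * -γ := by rw [haα]; ring
  rw [cpow_ofReal_cpow hw ha, hankelIntegrand, hankelIntegrand, hexponent, cpow_add _ _ hw0]
  ring

theorem cos_pi_div_two_mul_le_re_lineReOne_cpow {a : ℝ} (ha : a ∈ Icc 0 1) (y : ℝ) :
    Real.cos (π / 2 * a) ≤ (lineReOne y ^ (a : ℂ)).re := by
  have hcos : 0 ≤ Real.cos (π / 2 * a) := Real.cos_nonneg_of_neg_pi_div_two_le_of_le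
    (by nlinarith [ha.1, Real.pi_pos]) (by nlinarith [ha.2, Real.pi_pos])
  calc Real.cos (π / 2 * a) ≤ Real.cos (π / 2 * a) * ‖lineReOne y‖ ^ a :=
        le_mul_of_one_le_right hcos (Real.one_le_rpow (one_le_norm_lineReOne y) ha.1)
    _ ≤ (lineReOne y ^ (a : ℂ)).re :=
        cos_mul_norm_rpow_le_re_cpow (by simp) ⟨ha.1, ha.2.trans one_le_two⟩

theorem ofReal_wright_mul_rpow_sub {p α γ β x t : ℝ} (hp : p ∈ Ioo 1 3) (hα : α < 1) (ht : x ≤ t) :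
    ((wright (-α) β (-t) * (t - x) ^ (γ - 1) : ℝ) : ℂ) = (2 * π : ℂ)⁻¹ *
      ((∫ y, hankelIntegrand p β (lineReOne y) * exp (-(lineReOne y ^ ((p * α : ℝ) : ℂ) * t))) *
        ((t - x : ℝ) : ℂ) ^ ((γ : ℂ) - 1)) := by
  rw [ofReal_mul, ofReal_wright_neg_neg_eq_integral hp hα, ofReal_cpow (sub_nonneg.2 ht), mul_assoc]
  push_cast; rfl

theorem integrableOn_and_integral_ofReal_wright_mul_rpow_sub {p α γ : ℝ} (hp : p ∈ Ioo 1 3)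
    (hα : 0 ≤ α) (hpα : p * α < 1) (hγ : 0 < γ) (β x : ℝ) :
    IntegrableOn (fun t => ((wright (-α) (β - α * γ) (-t) * (t - x) ^ (γ - 1) : ℝ) : ℂ)) (Ioi x) ∧
      ∫ t in Ioi x, ((wright (-α) (β - α * γ) (-t) * (t - x) ^ (γ - 1) : ℝ) : ℂ) =
        Gamma γ * wright (-α) β (-x) := by
  have hα1 : α < 1 := by nlinarith [hp.1]
  have hpα0 : 0 ≤ p * α := mul_nonneg (by linarith [hp.1]) hα
  have hcos : 0 < Real.cos (π / 2 * (p * α)) := Real.cos_pos_of_mem_Ioo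
    ⟨by nlinarith [Real.pi_pos], by nlinarith [Real.pi_pos]⟩
  have hre := cos_pi_div_two_mul_le_re_lineReOne_cpow ⟨hpα0, hpα.le⟩
  have hint := integrable_hankelIntegrand_mul_exp_neg hp (hpα.trans hp.1)
    ((β - α * γ : ℝ) : ℂ) x
  have hu := (continuous_lineReOne_cpow_const ((p * α : ℝ) : ℂ)).measurable
  have hγ' : 0 < (γ : ℂ).re := hγ
  have hwright : EqOn _ _ (Ioi x) := fun t (ht : x < t) =>
    ofReal_wright_mul_rpow_sub (γ := γ) (β := β - α * γ) hp hα1 ht.le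
  have hexponent (y : ℝ) : hankelIntegrand p ((β - α * γ : ℝ) : ℂ) (lineReOne y) *
      (lineReOne y ^ ((p * α : ℝ) : ℂ)) ^ (-γ : ℂ) = hankelIntegrand p β (lineReOne y) := by
    rw [ofReal_sub, ofReal_mul]
    exact hankelIntegrand_mul_cpow_cpow_neg p β γ (abs_le.2 ⟨by linarith, by linarith⟩) (by simp)
      (ofReal_mul p α)
  constructor
  · exact (integrableOn_congr_fun hwright measurableSet_Ioi).2
      ((integrableOn_integral_exp_neg_mul_mul_sub_cpow_Ioi hint hu hcos hre hγ').const_mul _)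
  · rw [setIntegral_congr_fun measurableSet_Ioi hwright, integral_const_mul,
      integral_integral_exp_neg_mul_mul_sub_cpow_Ioi hint hu hcos hre hγ',
      ofReal_wright_neg_neg_eq_integral hp hα1]
    simp only [hexponent]
    ring

end WrightFractionalIntegral

theorem wright_fractional_integral_general (α γ β x : ℝ) (hα : α ∈ Set.Ico (0 : ℝ) 1)
    (hγ : 0 < γ) :
    IntegrableOn (fun t => wright (-α) (β - α * γ) (-t) * (t - x) ^ (γ - 1)) (Set.Ioi x) ∧
      wright (-α) β (-x) = (1 / Real.Gamma γ) *
        ∫ t in Set.Ioi x, wright (-α) (β - α * γ) (-t) * (t - x) ^ (γ - 1) := by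
  obtain ⟨hα0, hα1⟩ := hα
  -- `2 / (1 + α)` is the harmonic mean of `1` and `1 / α`.
  have hp : 2 / (1 + α) ∈ Set.Ioo 1 3 :=
    ⟨by rw [lt_div_iff₀] <;> linarith, by rw [div_lt_iff₀] <;> linarith⟩
  have hpα : 2 / (1 + α) * α < 1 := by
    rw [div_mul_eq_mul_div, div_lt_one] <;> linarith
  obtain ⟨hintegrable, hintegral⟩ :=
    integrableOn_and_integral_ofReal_wright_mul_rpow_sub hp hα0 hpα hγ β x
  refine ⟨by simpa [IntegrableOn] using hintegrable.re, ?_⟩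
  rw [integral_complex_ofReal, Complex.Gamma_ofReal] at hintegral
  norm_cast at hintegral
  rw [hintegral, one_div, inv_mul_cancel_left₀ (Real.Gamma_pos_of_pos hγ).ne']

/-- Fractional integration identity:
`φ(-α, β, -x) = (1/Γ(γ)) ∫_x^∞ φ(-α, β - αγ, -t) (t-x)^{γ-1} dt` for `α ∈ (0,1)`,
`γ > 0`, `β ∈ ℝ` and `x ≥ 0`, with the integral absolutely convergent. -/
theorem wright_fractional_integral (α γ β x : ℝ) (hα : α ∈ Set.Ioo (0 : ℝ) 1)
    (hγ : 0 < γ) (hx : 0 ≤ x) :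
    IntegrableOn (fun t => wright (-α) (β - α * γ) (-t) * (t - x) ^ (γ - 1))
      (Set.Ioi x) ∧
    wright (-α) β (-x) =
      (1 / Real.Gamma γ) *
        ∫ t in Set.Ioi x, wright (-α) (β - α * γ) (-t) * (t - x) ^ (γ - 1) := by
  exact wright_fractional_integral_general α γ β x ⟨hα.1.le, hα.2⟩ hγ
end

section
/- For every α ∈ (0,1) and β ≥ 0: φ(-α, β, -x) > 0 for all x > 0, the function x ↦ φ(-α, β, -x) is integrable on (0,∞), and ∫_0^∞ φ(-α, β, -x) dx = 1/Γ(α+β). Consequently x ↦ Γ(α+β)·φ(-α, β, -x) is a probability density on (0,∞). -/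
open MeasureTheory

/-!
Substituting `z = exp w` in Hankel's integral for `1 / Γ` and summing the defining series writes
`φ(-α, β, -x)` as `1 / π` times the imaginary part of `∫ exp (exp w - x exp (α w) + (1 - β) w) dw`
along a path from `0` to `∞ + i θ`. In these logarithmic coordinates the integrand is entire, so the
path may be deformed freely. For `0 ≤ β < 1` it is pushed to the steepest descent curve, on which
`exp w - x exp (α w)` is real and decreasing; after an integration by parts the integrand has
positive imaginary part along the curve, and so has the integral.

Differentiating the series gives `d/dx φ(-α, β, -x) = -φ(-α, β - α, -x)`, and opening the contour
to the angle `π / (1 + α)` shows that `φ(-α, β, -x)` tends to `0` as `x → ∞`. Hence positivity at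
`β - α` makes `φ(-α, β, -x)` strictly decreasing with limit `0`, so positive, and induction reaches
all `β ≥ 0`. The integral of `φ(-α, β, -x)` is the total increment of its primitive
`-φ(-α, α + β, -x)`.
-/

open Filter Set Topology
open Complex (I wedgeIntegral)
open scoped Interval Real

section Primitive

variable {g : ℂ → ℂ}

lemma hasDerivAt_wedgeIntegral_zero (hg : Differentiable ℂ g) (z : ℂ) :
    HasDerivAt (fun w ↦ wedgeIntegral 0 w g) (g z) z :=
  hg.differentiableOn.isConservativeOn.hasDerivAt_wedgeIntegral (r := ‖z‖ + 1)
    hg.continuous.continuousOn (by simp)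

lemma wedgeIntegral_zero_eq_sub {F : ℂ → ℂ} (hg : Differentiable ℂ g)
    (hF : ∀ z, HasDerivAt F (g z) z) (w : ℂ) : wedgeIntegral 0 w g = F w - F 0 := by
  have hderiv (z : ℂ) : HasDerivAt (fun w ↦ wedgeIntegral 0 w g - F w) 0 z :=
    ((hasDerivAt_wedgeIntegral_zero hg z).sub (hF z)).congr_deriv (sub_self _)
  have hconst := is_const_of_deriv_eq_zero (fun z ↦ (hderiv z).differentiableAt)
    (fun z ↦ (hderiv z).deriv) w 0
  have hzero : wedgeIntegral 0 0 g = 0 := by simp [wedgeIntegral]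
  rw [hzero] at hconst
  linear_combination hconst

lemma norm_wedgeIntegral_zero_sub_le (hg : Continuous g) {ρ s t C : ℝ}
    (hC : ∀ y ∈ Ι s t, ‖g (ρ + y * I)‖ ≤ C) :
    ‖wedgeIntegral 0 (ρ + t * I) g - wedgeIntegral 0 (ρ + s * I) g‖ ≤ C * |t - s| := by
  have hint (u : ℝ) : IntervalIntegrable (fun y : ℝ ↦ g (ρ + y * I)) volume 0 u :=
    Continuous.intervalIntegrable (by fun_prop) _ _
  have hsub : wedgeIntegral 0 (ρ + t * I) g - wedgeIntegral 0 (ρ + s * I) g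
      = I * ∫ y in s..t, g (ρ + y * I) := by
    rw [← intervalIntegral.integral_interval_sub_left (hint t) (hint s)]
    simp [wedgeIntegral, mul_sub]
  rw [hsub, norm_mul, Complex.norm_I, one_mul]
  exact intervalIntegral.norm_integral_le_of_norm_le_const hC

lemma im_wedgeIntegral_zero_ofReal (hg : ∀ r : ℝ, (g r).im = 0) (ρ : ℝ) :
    (wedgeIntegral 0 (ρ : ℂ) g).im = 0 := by
  have hre (r : ℝ) : g r = ((g r).re : ℂ) := Complex.ext rfl (hg r)
  have hint : ∫ r in (0 : ℝ)..ρ, g r = ((∫ r in (0 : ℝ)..ρ, (g r).re : ℝ) : ℂ) := by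
    rw [← intervalIntegral.integral_ofReal]
    exact intervalIntegral.integral_congr fun r _ ↦ hre r
  simp [wedgeIntegral, hint]

end Primitive

section HankelIntegral

/-- The integral of `g` along the upper half of Hankel's contour in logarithmic coordinates:
up the segment from `0` to `iθ`, then along the ray from `iθ` to `+∞ + iθ`. The substitution
`z = exp w` turns this path into the arc of the unit circle from angle `0` to angle `θ` followed by
the ray of angle `θ`. The lower half is its mirror image, so for `g` real on the real axis the
integral along the whole contour is `2i` times the imaginary part. -/
noncomputable def hankelIntegral (θ : ℝ) (g : ℂ → ℂ) : ℂ :=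
  I * (∫ t in (0 : ℝ)..θ, g (t * I)) + ∫ ρ in Ioi (0 : ℝ), g (ρ + θ * I)

variable {θ : ℝ}

lemma hankelIntegral_const_mul (c : ℂ) (g : ℂ → ℂ) :
    hankelIntegral θ (fun w ↦ c * g w) = c * hankelIntegral θ g := by
  simp only [hankelIntegral, intervalIntegral.integral_const_mul, integral_const_mul]
  ring

lemma tendsto_wedgeIntegral_hankelIntegral {g : ℂ → ℂ} (hg : Differentiable ℂ g)
    (hint : IntegrableOn (fun ρ : ℝ ↦ g (ρ + θ * I)) (Ioi 0)) :
    Tendsto (fun ρ : ℝ ↦ wedgeIntegral 0 (ρ + θ * I) g) atTop (𝓝 (hankelIntegral θ g)) := by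
  have hray := intervalIntegral_tendsto_integral_Ioi 0 hint tendsto_id
  refine (hray.const_add (I * ∫ t in (0 : ℝ)..θ, g (t * I))).congr fun ρ ↦ ?_
  have hcons := hg.differentiableOn.isConservativeOn 0 (ρ + θ * I) (subset_univ _)
  rw [hcons]
  simp [wedgeIntegral, intervalIntegral.integral_symm (0 : ℝ)]

lemma tendsto_hankelIntegral_of_dominated {ι : Type*} {l : Filter ι} [l.IsCountablyGenerated]
    (hθ : 0 ≤ θ) {F : ι → ℂ → ℂ} {f : ℂ → ℂ} {B : ℂ → ℝ} (hF : ∀ i, Continuous (F i))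
    (hB : Continuous B) (hBint : IntegrableOn (fun ρ : ℝ ↦ B (ρ + θ * I)) (Ioi 0))
    (hFB : ∀ᶠ i in l, ∀ w ∈ Ici 0 ×ℂ Icc 0 θ, ‖F i w‖ ≤ B w)
    (hlim : ∀ w ∈ Ici 0 ×ℂ Icc 0 θ, Tendsto (F · w) l (𝓝 (f w))) :
    Tendsto (fun i ↦ hankelIntegral θ (F i)) l (𝓝 (hankelIntegral θ f)) := by
  have hseg {t : ℝ} (ht : t ∈ Ι 0 θ) : (t * I : ℂ) ∈ Ici 0 ×ℂ Icc 0 θ := by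
    rw [uIoc_of_le hθ] at ht
    simpa [Complex.mem_reProdIm] using Ioc_subset_Icc_self ht
  have hray {ρ : ℝ} (hρ : ρ ∈ Ioi 0) : (ρ + θ * I : ℂ) ∈ Ici 0 ×ℂ Icc 0 θ := by
    simpa [Complex.mem_reProdIm, hθ] using le_of_lt hρ
  refine Tendsto.add (Tendsto.const_mul I ?_) ?_
  · refine intervalIntegral.tendsto_integral_filter_of_dominated_convergence (fun t ↦ B (t * I))
      (.of_forall fun i ↦ Continuous.aestronglyMeasurable (by fun_prop)) ?_
      (Continuous.intervalIntegrable (by fun_prop) _ _)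
      (.of_forall fun t ht ↦ hlim _ (hseg ht))
    filter_upwards [hFB] with i hi using .of_forall fun t ht ↦ hi _ (hseg ht)
  · refine tendsto_integral_filter_of_dominated_convergence (fun ρ ↦ B (ρ + θ * I))
      (.of_forall fun i ↦ Continuous.aestronglyMeasurable (by fun_prop)) ?_ hBint
      (ae_restrict_of_forall_mem measurableSet_Ioi fun ρ hρ ↦ hlim _ (hray hρ))
    filter_upwards [hFB] with i hi
    exact ae_restrict_of_forall_mem measurableSet_Ioi fun ρ hρ ↦ hi _ (hray hρ)

lemma hasSum_hankelIntegral {f : ℕ → ℂ → ℂ} {s : ℂ → ℂ} {B : ℂ → ℝ}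
    (hf : ∀ n, Continuous (f n)) (hB : Continuous B)
    (hBint : IntegrableOn (fun ρ : ℝ ↦ B (ρ + θ * I)) (Ioi 0))
    (hfB : ∀ w, HasSum (fun n ↦ ‖f n w‖) (B w)) (hfs : ∀ w, HasSum (f · w) (s w)) :
    HasSum (fun n ↦ hankelIntegral θ (f n)) (hankelIntegral θ s) := by
  refine HasSum.add (HasSum.mul_left I ?_) ?_
  · refine intervalIntegral.hasSum_integral_of_dominated_convergence (fun n t ↦ ‖f n (t * I)‖)
      (fun n ↦ Continuous.aestronglyMeasurable (by fun_prop)) (fun n ↦ .of_forall fun _ _ ↦ le_rfl)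
      (.of_forall fun t _ ↦ (hfB _).summable) ?_ (.of_forall fun t _ ↦ hfs _)
    simp_rw [(hfB _).tsum_eq]
    exact Continuous.intervalIntegrable (by fun_prop) _ _
  · refine hasSum_integral_of_dominated_convergence (fun n ρ ↦ ‖f n (ρ + θ * I)‖)
      (fun n ↦ Continuous.aestronglyMeasurable (by fun_prop)) (fun n ↦ .of_forall fun _ ↦ le_rfl)
      (.of_forall fun ρ ↦ (hfB _).summable) ?_ (.of_forall fun ρ ↦ hfs _)
    simp_rw [(hfB _).tsum_eq]
    exact hBint

end HankelIntegral

section Kernel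

/-- The phase `exp w - x exp (α w)` of the Wright kernel, which is `z - x z ^ α` at `z = exp w`. -/
noncomputable def wrightPhase (α x : ℝ) (w : ℂ) : ℂ := Complex.exp w - x * Complex.exp (α * w)

/-- The kernel of the Hankel-type representation of the Wright function: under `z = exp w` the
form `wrightKernel α x b w dw` is `exp (z - x z ^ α) z ^ (b - 1) dz`. Logarithmic coordinates make
the kernel entire. -/
noncomputable def wrightKernel (α x b : ℝ) (w : ℂ) : ℂ := Complex.exp (wrightPhase α x w + b * w)

/-- An upper bound for `‖wrightKernel α x b w‖`, decreasing in `w.im ∈ [0, π]` and not depending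
on the sign of `x`. -/
noncomputable def wrightMajorant (α x b : ℝ) (w : ℂ) : ℝ :=
  Real.exp (Real.exp w.re * Real.cos w.im + |x| * Real.exp (α * w.re) + b * w.re)

variable (α x b : ℝ)

lemma hasDerivAt_wrightPhase (w : ℂ) :
    HasDerivAt (wrightPhase α x) (Complex.exp w - x * (α * Complex.exp (α * w))) w := by
  have hα := ((hasDerivAt_id w).const_mul (α : ℂ)).cexp
  refine (Complex.hasDerivAt_exp w).sub ((hα.const_mul (x : ℂ)).congr_deriv ?_)
  simp only [id, mul_one]
  ring

lemma hasDerivAt_wrightKernel (w : ℂ) :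
    HasDerivAt (wrightKernel α x b)
      ((Complex.exp w - x * (α * Complex.exp (α * w)) + b) * wrightKernel α x b w) w := by
  have hlin := (hasDerivAt_id w).const_mul (b : ℂ)
  refine ((hasDerivAt_wrightPhase α x w).add hlin).cexp.congr_deriv ?_
  simp [wrightKernel, mul_comm]

@[fun_prop]
lemma differentiable_wrightKernel : Differentiable ℂ (wrightKernel α x b) :=
  fun w ↦ (hasDerivAt_wrightKernel α x b w).differentiableAt

@[fun_prop]
lemma continuous_wrightKernel : Continuous (wrightKernel α x b) :=
  (differentiable_wrightKernel α x b).continuous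

@[fun_prop]
lemma continuous_wrightMajorant : Continuous (wrightMajorant α x b) := by
  unfold wrightMajorant
  fun_prop

lemma im_wrightKernel_ofReal (r : ℝ) : (wrightKernel α x b r).im = 0 := by
  have hreal : wrightKernel α x b r
      = (Real.exp (Real.exp r - x * Real.exp (α * r) + b * r) : ℝ) := by
    simp [wrightKernel, wrightPhase]
  rw [hreal, Complex.ofReal_im]

lemma re_wrightPhase (w : ℂ) : (wrightPhase α x w).re
    = Real.exp w.re * Real.cos w.im - x * (Real.exp (α * w.re) * Real.cos (α * w.im)) := by
  simp [wrightPhase, Complex.exp_re]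

lemma im_wrightPhase (w : ℂ) : (wrightPhase α x w).im
    = Real.exp w.re * Real.sin w.im - x * (Real.exp (α * w.re) * Real.sin (α * w.im)) := by
  simp [wrightPhase, Complex.exp_im]

lemma norm_wrightKernel (w : ℂ) :
    ‖wrightKernel α x b w‖ = Real.exp ((wrightPhase α x w).re + b * w.re) := by
  simp [wrightKernel, Complex.norm_exp]

lemma norm_wrightKernel_le (w : ℂ) :
    ‖wrightKernel α x b w‖ ≤ wrightMajorant α x b w := by
  have habs : -x * (Real.exp (α * w.re) * Real.cos (α * w.im)) ≤ |x| * Real.exp (α * w.re) := by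
    refine (le_abs_self _).trans ?_
    rw [abs_mul, abs_neg, abs_mul, Real.abs_exp]
    gcongr
    exact mul_le_of_le_one_right (Real.exp_pos _).le (Real.abs_cos_le_one _)
  rw [norm_wrightKernel, re_wrightPhase, wrightMajorant, Real.exp_le_exp]
  linarith

lemma wrightMajorant_anti_im (ρ : ℝ) :
    AntitoneOn (fun t : ℝ ↦ wrightMajorant α x b (ρ + t * I)) (Icc 0 π) := by
  intro s hs t ht hst
  have hcos := Real.cos_le_cos_of_nonneg_of_le_pi hs.1 ht.2 hst
  simp only [wrightMajorant, Complex.add_re, Complex.ofReal_re, Complex.re_ofReal_mul,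
    Complex.I_re, mul_zero, add_zero, Complex.add_im, Complex.ofReal_im, Complex.im_ofReal_mul,
    Complex.I_im, mul_one, zero_add]
  gcongr

lemma wrightMajorant_mono_right {b c : ℝ} (hbc : b ≤ c) {w : ℂ} (hw : 0 ≤ w.re) :
    wrightMajorant α x b w ≤ wrightMajorant α x c w := by
  unfold wrightMajorant
  gcongr

variable {α} {θ : ℝ}

lemma tendsto_const_mul_exp_add_atBot {c : ℝ} (hα : α < 1) (hc : c < 0) :
    Tendsto (fun ρ : ℝ ↦ Real.exp ρ * c + x * Real.exp (α * ρ) + b * ρ) atTop atBot := by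
  have hexp : Tendsto (fun ρ : ℝ ↦ Real.exp ((α - 1) * ρ)) atTop (𝓝 0) :=
    Real.tendsto_exp_atBot.comp (tendsto_id.const_mul_atTop_of_neg (by linarith))
  have hlin : Tendsto (fun ρ : ℝ ↦ ρ * Real.exp (-ρ)) atTop (𝓝 0) := by
    simpa using Real.tendsto_pow_mul_exp_neg_atTop_nhds_zero 1
  have hfactor : Tendsto (fun ρ : ℝ ↦ c + x * Real.exp ((α - 1) * ρ) + b * (ρ * Real.exp (-ρ)))
      atTop (𝓝 c) := by
    simpa using ((hexp.const_mul x).const_add c).add (hlin.const_mul b)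
  refine (Real.tendsto_exp_atTop.atTop_mul_neg hc hfactor).congr fun ρ ↦ ?_
  have hα_add : Real.exp ρ * Real.exp ((α - 1) * ρ) = Real.exp (α * ρ) := by
    rw [← Real.exp_add]
    ring_nf
  have hneg : Real.exp ρ * Real.exp (-ρ) = 1 := by simp [← Real.exp_add]
  linear_combination x * hα_add + b * ρ * hneg

lemma cos_neg_of_mem_Ioc (hθ : θ ∈ Ioc (π / 2) π) : Real.cos θ < 0 :=
  Real.cos_neg_of_pi_div_two_lt_of_lt hθ.1 (by linarith [hθ.2, Real.pi_pos])

lemma tendsto_wrightMajorant_atTop (hα : α < 1) (hθ : θ ∈ Ioc (π / 2) π) :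
    Tendsto (fun ρ : ℝ ↦ wrightMajorant α x b (ρ + θ * I)) atTop (𝓝 0) := by
  refine (Real.tendsto_exp_atBot.comp
    (tendsto_const_mul_exp_add_atBot |x| b hα (cos_neg_of_mem_Ioc hθ))).congr fun ρ ↦ ?_
  simp [wrightMajorant]

lemma integrableOn_wrightMajorant (hα : α < 1) (hθ : θ ∈ Ioc (π / 2) π) :
    IntegrableOn (fun ρ : ℝ ↦ wrightMajorant α x b (ρ + θ * I)) (Ioi 0) := by
  refine integrable_of_isBigO_exp_neg one_pos (by fun_prop) ?_
  have hbdd := (tendsto_wrightMajorant_atTop x (b + 1) hα hθ).isBigO_one ℝ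
  refine (hbdd.mul (Asymptotics.isBigO_refl (fun ρ : ℝ ↦ Real.exp (-1 * ρ)) atTop)).congr
    (fun ρ ↦ ?_) (fun ρ ↦ one_mul _)
  rw [wrightMajorant, wrightMajorant, ← Real.exp_add]
  simp only [Complex.add_re, Complex.ofReal_re, Complex.re_ofReal_mul, Complex.I_re]
  ring_nf

lemma integrableOn_wrightKernel (hα : α < 1) (hθ : θ ∈ Ioc (π / 2) π) :
    IntegrableOn (fun ρ : ℝ ↦ wrightKernel α x b (ρ + θ * I)) (Ioi 0) :=
  (integrableOn_wrightMajorant x b hα hθ).mono'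
    (Continuous.aestronglyMeasurable (by fun_prop))
    (.of_forall fun _ ↦ norm_wrightKernel_le α x b _)

lemma tendsto_wedgeIntegral_wrightKernel (hα : α < 1) (hθ : θ ∈ Ioc (π / 2) π) {ι : Type*}
    {l : Filter ι} {ρ t : ι → ℝ} (hρ : Tendsto ρ l atTop) (ht : ∀ᶠ i in l, t i ∈ Icc θ π) :
    Tendsto (fun i ↦ wedgeIntegral 0 (ρ i + t i * I) (wrightKernel α x b)) l
      (𝓝 (hankelIntegral θ (wrightKernel α x b))) := by
  have hθ0 : 0 ≤ θ := by linarith [hθ.1, Real.pi_pos]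
  have hray := (tendsto_wedgeIntegral_hankelIntegral (differentiable_wrightKernel α x b)
    (integrableOn_wrightKernel x b hα hθ)).comp hρ
  have hbound := ((tendsto_wrightMajorant_atTop x b hα hθ).comp hρ).mul_const π
  rw [zero_mul] at hbound
  have harc : Tendsto (fun i ↦ wedgeIntegral 0 (ρ i + t i * I) (wrightKernel α x b)
      - wedgeIntegral 0 (ρ i + θ * I) (wrightKernel α x b)) l (𝓝 0) := by
    refine squeeze_zero_norm' ?_ hbound
    filter_upwards [ht] with i hi
    refine (norm_wedgeIntegral_zero_sub_le (continuous_wrightKernel α x b) fun y hy ↦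
      (norm_wrightKernel_le α x b _).trans ?_).trans
        (mul_le_mul_of_nonneg_left ?_ (Real.exp_pos _).le)
    · rw [uIoc_of_le hi.1] at hy
      exact wrightMajorant_anti_im α x b (ρ i) ⟨hθ0, hθ.2⟩
        ⟨hθ0.trans hy.1.le, hy.2.trans hi.2⟩ hy.1.le
    · rw [abs_of_nonneg (sub_nonneg.2 hi.1)]
      linarith [hi.2]
  simpa using harc.add hray

end Kernel

section ChangeOfVariables

variable {E : Type*} [NormedAddCommGroup E] [NormedSpace ℝ E] (f : ℝ → E)

lemma integrable_exp_smul_comp_exp :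
    Integrable (fun r ↦ Real.exp r • f (Real.exp r)) ↔ IntegrableOn f (Ioi 0) := by
  rw [← Real.range_exp, ← image_univ, integrableOn_image_iff_integrableOn_abs_deriv_smul .univ
    (fun r _ ↦ (Real.hasDerivAt_exp r).hasDerivWithinAt) Real.exp_injective.injOn]
  simp only [Real.abs_exp, integrableOn_univ]

lemma integral_exp_smul_comp_exp :
    ∫ r, Real.exp r • f (Real.exp r) = ∫ z in Ioi 0, f z := by
  rw [← Real.range_exp, ← image_univ, integral_image_eq_integral_abs_deriv_smul .univ
    (fun r _ ↦ (Real.hasDerivAt_exp r).hasDerivWithinAt) Real.exp_injective.injOn]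
  simp only [Real.abs_exp, setIntegral_univ]

end ChangeOfVariables

section HankelFormula

variable {a θ : ℝ}

lemma exp_smul_gammaIntegrand_exp (a r : ℝ) :
    Real.exp r • (Real.exp (-Real.exp r) * Real.exp r ^ (a - 1))
      = Real.exp (a * r - Real.exp r) := by
  rw [smul_eq_mul, ← Real.exp_mul, ← Real.exp_add, ← Real.exp_add]
  ring_nf

lemma integrable_exp_mul_sub_exp (ha : 0 < a) :
    Integrable fun r : ℝ ↦ Real.exp (a * r - Real.exp r) := by
  simpa only [exp_smul_gammaIntegrand_exp] using
    (integrable_exp_smul_comp_exp _).2 (Real.GammaIntegral_convergent ha)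

lemma integral_exp_mul_sub_exp (ha : 0 < a) :
    ∫ r : ℝ, Real.exp (a * r - Real.exp r) = Real.Gamma a := by
  simpa only [exp_smul_gammaIntegrand_exp, Real.Gamma_eq_integral ha] using
    integral_exp_smul_comp_exp fun z ↦ Real.exp (-z) * z ^ (a - 1)

lemma sin_mul_gamma (ha : 0 < a) :
    Real.sin (π * a) * Real.Gamma a = π / Real.Gamma (1 - a) := by
  have hΓ := (Real.Gamma_pos_of_pos ha).ne'
  have hreflection := congrArg (·⁻¹) (Real.Gamma_mul_Gamma_one_sub a)
  simp only [mul_inv, inv_div] at hreflection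
  rw [eq_div_iff Real.pi_ne_zero, mul_assoc, inv_mul_eq_iff_eq_mul₀ hΓ] at hreflection
  linear_combination -hreflection

lemma hasDerivAt_comp_ofReal_add {F : ℂ → ℂ} {F' c : ℂ} {r : ℝ} (hF : HasDerivAt F F' (r + c)) :
    HasDerivAt (fun s : ℝ ↦ F (s + c)) F' r :=
  (hF.comp_add_const (r : ℂ) c).comp_ofReal

lemma hasDerivAt_im {f : ℝ → ℂ} {f' : ℂ} {r : ℝ} (hf : HasDerivAt f f' r) :
    HasDerivAt (fun s ↦ (f s).im) f'.im r :=
  Complex.imCLM.hasFDerivAt.comp_hasDerivAt r hf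

lemma im_wrightKernel_add_pi_mul_I (a r : ℝ) : (wrightKernel 0 0 a (r + π * I)).im
    = Real.sin (π * a) * Real.exp (a * r - Real.exp r) := by
  have hphase : wrightPhase 0 0 (r + π * I) + a * (r + π * I)
      = ((a * r - Real.exp r : ℝ) : ℂ) + (π * a : ℝ) * I := by
    simp only [wrightPhase, Complex.exp_add, Complex.exp_pi_mul_I]
    push_cast
    ring
  rw [wrightKernel, hphase, Complex.exp_add, ← Complex.ofReal_exp, Complex.im_ofReal_mul,
    Complex.exp_ofReal_mul_I_im, mul_comm]

lemma tendsto_im_wedgeIntegral_wrightKernel_atBot (ha : 0 < a) :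
    Tendsto (fun r : ℝ ↦ (wedgeIntegral 0 (r + π * I) (wrightKernel 0 0 a)).im) atBot (𝓝 0) := by
  have hexponent : Tendsto (fun r : ℝ ↦ Real.exp r + a * r) atBot atBot :=
    Real.tendsto_exp_atBot.add_atBot (tendsto_id.const_mul_atBot ha)
  have hbound := (Real.tendsto_exp_atBot.comp hexponent).mul_const π
  rw [zero_mul] at hbound
  refine squeeze_zero_norm (fun r ↦ ?_) hbound
  have hle (y : ℝ) : ‖wrightKernel 0 0 a (r + y * I)‖ ≤ Real.exp (Real.exp r + a * r) := by
    rw [norm_wrightKernel, re_wrightPhase]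
    simpa using mul_le_of_le_one_right (Real.exp_pos r).le (Real.cos_le_one y)
  have harc := (Complex.abs_im_le_norm _).trans <| norm_wedgeIntegral_zero_sub_le
    (continuous_wrightKernel 0 0 a) (s := 0) (t := π) fun y _ ↦ hle y
  simpa [im_wedgeIntegral_zero_ofReal (im_wrightKernel_ofReal 0 0 a), abs_of_pos Real.pi_pos]
    using harc

lemma im_hankelIntegral_wrightKernel_zero_of_pos (hθ : θ ∈ Ioc (π / 2) π) (ha : 0 < a) :
    (hankelIntegral θ (wrightKernel 0 0 a)).im = π / Real.Gamma (1 - a) := by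
  have hderiv (r : ℝ) :
      HasDerivAt (fun s : ℝ ↦ (wedgeIntegral 0 (s + π * I) (wrightKernel 0 0 a)).im)
        (Real.sin (π * a) * Real.exp (a * r - Real.exp r)) r := by
    rw [← im_wrightKernel_add_pi_mul_I]
    exact hasDerivAt_im <| hasDerivAt_comp_ofReal_add <|
      hasDerivAt_wedgeIntegral_zero (differentiable_wrightKernel 0 0 a) _
  have hlim := (Complex.continuous_im.tendsto _).comp <| tendsto_wedgeIntegral_wrightKernel 0 a
    zero_lt_one hθ tendsto_id (.of_forall fun _ ↦ right_mem_Icc.2 hθ.2)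
  have hFTC := integral_of_hasDerivAt_of_tendsto hderiv
    ((integrable_exp_mul_sub_exp ha).const_mul _)
    (tendsto_im_wedgeIntegral_wrightKernel_atBot ha) hlim
  rwa [integral_const_mul, integral_exp_mul_sub_exp ha, sin_mul_gamma ha, sub_zero, eq_comm]
    at hFTC

lemma continuous_hankelIntegral_wrightKernel (hθ : θ ∈ Ioc (π / 2) π) :
    Continuous fun b ↦ hankelIntegral θ (wrightKernel 0 0 b) := by
  refine continuous_iff_continuousAt.2 fun b₀ ↦ ?_
  refine tendsto_hankelIntegral_of_dominated (by linarith [hθ.1, Real.pi_pos])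
    (continuous_wrightKernel 0 0) (continuous_wrightMajorant 0 0 (b₀ + 1))
    (integrableOn_wrightMajorant 0 (b₀ + 1) zero_lt_one hθ) ?_ fun w _ ↦ ?_
  · filter_upwards [Iic_mem_nhds (lt_add_one b₀)] with b hb w hw
    exact (norm_wrightKernel_le 0 0 b w).trans (wrightMajorant_mono_right 0 0 hb hw.1)
  · exact Continuous.tendsto (by unfold wrightKernel; fun_prop) b₀

lemma im_hankelIntegral_wrightKernel_zero_zero (hθ : θ ∈ Ioc (π / 2) π) :
    (hankelIntegral θ (wrightKernel 0 0 0)).im = π / Real.Gamma (1 - 0) := by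
  have hleft : Tendsto (fun a ↦ (hankelIntegral θ (wrightKernel 0 0 a)).im) (𝓝[>] 0)
      (𝓝 (hankelIntegral θ (wrightKernel 0 0 0)).im) :=
    (Complex.continuous_im.comp (continuous_hankelIntegral_wrightKernel hθ)).continuousWithinAt
  have hΓ : ContinuousAt (fun a ↦ Real.Gamma (1 - a)) 0 :=
    ContinuousAt.comp_of_eq (g := Real.Gamma) Real.hasDerivAt_Gamma_one.continuousAt
      (by fun_prop) (sub_zero 1)
  have hright : Tendsto (fun a ↦ π / Real.Gamma (1 - a)) (𝓝[>] 0) (𝓝 (π / Real.Gamma (1 - 0))) :=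
    (continuousAt_const.div hΓ (by simp)).continuousWithinAt
  refine tendsto_nhds_unique hleft (hright.congr' ?_)
  filter_upwards [self_mem_nhdsWithin] with a ha
  exact (im_hankelIntegral_wrightKernel_zero_of_pos hθ ha).symm

/- Integrate the derivative of `wrightKernel 0 0 a`, which is
`wrightKernel 0 0 (a + 1) + a * wrightKernel 0 0 a`. -/
lemma im_hankelIntegral_wrightKernel_add_one (hθ : θ ∈ Ioc (π / 2) π) (a : ℝ) :
    (hankelIntegral θ (wrightKernel 0 0 (a + 1))).im
      = -a * (hankelIntegral θ (wrightKernel 0 0 a)).im := by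
  have hderiv (w : ℂ) : HasDerivAt (fun w ↦ wrightKernel 0 0 a w - a * wedgeIntegral 0 w
      (wrightKernel 0 0 a)) (wrightKernel 0 0 (a + 1) w) w := by
    refine ((hasDerivAt_wrightKernel 0 0 a w).sub ((hasDerivAt_wedgeIntegral_zero
      (differentiable_wrightKernel 0 0 a) w).const_mul (a : ℂ))).congr_deriv ?_
    simp only [wrightKernel, wrightPhase, Complex.ofReal_zero, Complex.ofReal_add,
      Complex.ofReal_one, add_mul, one_mul, ← add_assoc, Complex.exp_add _ w]
    ring
  have hprim (r : ℝ) : (wedgeIntegral 0 (r + θ * I) (wrightKernel 0 0 (a + 1))).im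
      = (wrightKernel 0 0 a (r + θ * I)).im
        - a * (wedgeIntegral 0 (r + θ * I) (wrightKernel 0 0 a)).im := by
    rw [wedgeIntegral_zero_eq_sub (differentiable_wrightKernel 0 0 (a + 1)) hderiv]
    have him := im_wrightKernel_ofReal 0 0 a 0
    have hzero : wedgeIntegral 0 0 (wrightKernel 0 0 a) = 0 := by simp [wedgeIntegral]
    simp_all
  have hkernel : Tendsto (fun r : ℝ ↦ wrightKernel 0 0 a (r + θ * I)) atTop (𝓝 0) :=
    squeeze_zero_norm (fun _ ↦ norm_wrightKernel_le 0 0 a _)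
      (tendsto_wrightMajorant_atTop 0 a zero_lt_one hθ)
  have hlim (b : ℝ) := (Complex.continuous_im.tendsto _).comp <|
    tendsto_wedgeIntegral_wrightKernel 0 b zero_lt_one hθ tendsto_id
      (.of_forall fun _ ↦ left_mem_Icc.2 hθ.2)
  have hlim' := ((Complex.continuous_im.tendsto _).comp hkernel).sub ((hlim a).const_mul a)
  simpa using tendsto_nhds_unique (hlim (a + 1)) (hlim'.congr fun r ↦ (hprim r).symm)

theorem im_hankelIntegral_wrightKernel_zero (hθ : θ ∈ Ioc (π / 2) π) (a : ℝ) :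
    (hankelIntegral θ (wrightKernel 0 0 a)).im = π / Real.Gamma (1 - a) := by
  obtain ⟨n, hn⟩ := exists_nat_gt (-a)
  induction n generalizing a with
  | zero => exact im_hankelIntegral_wrightKernel_zero_of_pos hθ (by simpa using hn)
  | succ n ih =>
    rcases lt_trichotomy a 0 with ha | rfl | ha
    · have hΓ : Real.Gamma (1 - a) = -a * Real.Gamma (1 - (a + 1)) := by
        rw [show 1 - a = -a + 1 by ring, Real.Gamma_add_one (by linarith)]
        ring_nf
      have hrec := ih (a + 1) (by push_cast at hn; linarith)
      rw [im_hankelIntegral_wrightKernel_add_one hθ] at hrec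
      rw [hΓ, ← div_div, div_right_comm, ← hrec, mul_div_cancel_left₀ _ (by linarith)]
    · exact im_hankelIntegral_wrightKernel_zero_zero hθ
    · exact im_hankelIntegral_wrightKernel_zero_of_pos hθ ha

end HankelFormula

section Representation

variable {α θ ρ : ℝ} (x β : ℝ)

lemma wrightKernel_add_mul_natCast (α b : ℝ) (n : ℕ) (w : ℂ) :
    wrightKernel 0 0 (b + α * n) w = wrightKernel 0 0 b w * Complex.exp (α * w) ^ n := by
  rw [wrightKernel, wrightKernel, ← Complex.exp_nat_mul, ← Complex.exp_add]
  push_cast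
  ring_nf

lemma hasSum_wrightKernel (α x b : ℝ) (w : ℂ) :
    HasSum (fun n : ℕ ↦ (((-x) ^ n / n.factorial : ℝ) : ℂ) * wrightKernel 0 0 (b + α * n) w)
      (wrightKernel α x b w) := by
  have hfactor : wrightKernel α x b w
      = wrightKernel 0 0 b w * Complex.exp (-x * Complex.exp (α * w)) := by
    simp only [wrightKernel, wrightPhase, ← Complex.exp_add]
    push_cast
    ring_nf
  have hexp := (NormedSpace.expSeries_div_hasSum_exp (-x * Complex.exp (α * w))).mul_left
    (wrightKernel 0 0 b w)
  rw [← Complex.exp_eq_exp_ℂ, ← hfactor] at hexp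
  refine hexp.congr_fun fun n ↦ ?_
  rw [wrightKernel_add_mul_natCast, mul_pow]
  push_cast
  ring

lemma hasSum_wrightMajorant (α x b : ℝ) (w : ℂ) :
    HasSum (fun n : ℕ ↦
      ‖(((-x) ^ n / n.factorial : ℝ) : ℂ) * wrightKernel 0 0 (b + α * n) w‖)
      (wrightMajorant α x b w) := by
  have hfactor : wrightMajorant α x b w
      = ‖wrightKernel 0 0 b w‖ * Real.exp (|x| * Real.exp (α * w.re)) := by
    rw [norm_wrightKernel, re_wrightPhase, wrightMajorant, ← Real.exp_add]
    ring_nf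
  have hexp := (NormedSpace.expSeries_div_hasSum_exp (|x| * Real.exp (α * w.re))).mul_left
    ‖wrightKernel 0 0 b w‖
  rw [← Real.exp_eq_exp_ℝ, ← hfactor] at hexp
  refine hexp.congr_fun fun n ↦ ?_
  rw [wrightKernel_add_mul_natCast, norm_mul, norm_mul, norm_pow,
    Complex.norm_exp, Complex.re_ofReal_mul, Complex.norm_real, norm_div, norm_pow, norm_neg,
    Real.norm_eq_abs, RCLike.norm_natCast, mul_pow]
  ring

lemma hasSum_wright (hα : α < 1) (hθ : θ ∈ Ioc (π / 2) π) :
    HasSum (fun n : ℕ ↦ (-x) ^ n / ((n.factorial : ℝ) * Real.Gamma (β + -α * n)))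
      ((hankelIntegral θ (wrightKernel α x (1 - β))).im / π) := by
  have hterms := hasSum_hankelIntegral (fun n ↦ by fun_prop) (by fun_prop)
    (integrableOn_wrightMajorant x (1 - β) hα hθ) (hasSum_wrightMajorant α x (1 - β))
    (hasSum_wrightKernel α x (1 - β))
  refine ((Complex.hasSum_im hterms).div_const π).congr_fun fun n ↦ ?_
  rw [hankelIntegral_const_mul, Complex.im_ofReal_mul, im_hankelIntegral_wrightKernel_zero hθ,
    show 1 - (1 - β + α * n) = β + -α * n by ring]
  field_simp

theorem wright_eq_im_hankelIntegral (hα : α < 1) (hθ : θ ∈ Ioc (π / 2) π) :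
    wright (-α) β (-x) = (hankelIntegral θ (wrightKernel α x (1 - β))).im / π :=
  (hasSum_wright x β hα hθ).tsum_eq

lemma summable_wright (hρ : -1 < ρ) :
    Summable fun n : ℕ ↦ x ^ n / ((n.factorial : ℝ) * Real.Gamma (β + ρ * n)) := by
  simpa using (hasSum_wright (-x) β (neg_lt.2 hρ)
    (right_mem_Ioc.2 (half_lt_self Real.pi_pos))).summable

lemma wright_zero_right (ρ β : ℝ) : wright ρ β 0 = 1 / Real.Gamma β := by
  refine (tsum_eq_single 0 fun n hn ↦ ?_).trans ?_ <;> simp [*]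

lemma hasDerivAt_wright (hρ : -1 < ρ) : HasDerivAt (wright ρ β) (wright ρ (β + ρ) x) x := by
  let d (n : ℕ) (y : ℝ) : ℝ := n * y ^ (n - 1) / ((n.factorial : ℝ) * Real.Gamma (β + ρ * n))
  have hd_succ (y : ℝ) (n : ℕ) :
      d (n + 1) y = y ^ n / ((n.factorial : ℝ) * Real.Gamma (β + ρ + ρ * n)) := by
    simp only [d, Nat.add_sub_cancel, Nat.factorial_succ]
    push_cast
    rw [show β + ρ * (n + 1) = β + ρ + ρ * n by ring, mul_assoc,
      mul_div_mul_left _ _ (by positivity)]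
  have hd_summable (y : ℝ) : Summable (d · y) := by
    rw [← summable_nat_add_iff 1]
    simpa only [hd_succ] using summable_wright y (β + ρ) hρ
  have hd_le {n : ℕ} {y : ℝ} (hy : y ∈ Ioo (-(|x| + 1)) (|x| + 1)) : ‖d n y‖ ≤ ‖d n (|x| + 1)‖ := by
    have hy_le : ‖y‖ ≤ ‖|x| + 1‖ := (abs_lt.2 hy).le.trans (le_abs_self _)
    simp only [d, norm_div, norm_mul, norm_pow]
    gcongr
  have hx : x ∈ Ioo (-(|x| + 1)) (|x| + 1) := abs_lt.1 (lt_add_one _)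
  have hsum : ∑' n, d n x = wright ρ (β + ρ) x := by
    rw [(hd_summable x).tsum_eq_zero_add]
    simp_rw [hd_succ]
    simp [d, wright]
  rw [← hsum]
  exact hasDerivAt_tsum_of_isPreconnected (hd_summable _).norm isOpen_Ioo isPreconnected_Ioo
    (fun n y _ ↦ (hasDerivAt_pow n y).div_const _) (fun n y hy ↦ hd_le hy) hx
    (summable_wright x β hρ) hx

lemma norm_wrightKernel_eq_mul (α x b : ℝ) (w : ℂ) : ‖wrightKernel α x b w‖
    = wrightMajorant 0 0 b w * Real.exp (-(x * (Real.exp (α * w.re) * Real.cos (α * w.im)))) := by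
  rw [norm_wrightKernel, re_wrightPhase, wrightMajorant, ← Real.exp_add]
  simp
  ring

/- For `|α| < 1` the opening angle `θ = π / (1 + |α|)` makes `cos θ` negative and keeps
`cos (α t)` positive for `t ∈ [0, θ]`. -/
lemma pi_div_one_add_abs_mem_Ioc (hα : |α| < 1) : π / (1 + |α|) ∈ Ioc (π / 2) π := by
  constructor
  · gcongr
    linarith
  · exact div_le_self Real.pi_pos.le (by simp)

lemma cos_mul_pos {t : ℝ} (hα : |α| < 1) (ht : t ∈ Icc 0 (π / (1 + |α|))) :
    0 < Real.cos (α * t) := by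
  have habs : |α * t| < π / 2 := by
    rw [abs_mul, abs_of_nonneg ht.1]
    have hle : |α| * t ≤ |α| * (π / (1 + |α|)) := by gcongr; exact ht.2
    refine hle.trans_lt ?_
    rw [← mul_div_assoc, div_lt_div_iff₀ (by positivity) two_pos]
    nlinarith [Real.pi_pos]
  exact Real.cos_pos_of_mem_Ioo (abs_lt.1 habs)

lemma tendsto_wright_atBot (hρ : |ρ| < 1) : Tendsto (wright ρ β) atBot (𝓝 0) := by
  obtain ⟨α, rfl⟩ : ∃ α, ρ = -α := ⟨-ρ, (neg_neg ρ).symm⟩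
  rw [abs_neg] at hρ
  have hα : α < 1 := (le_abs_self α).trans_lt hρ
  have hθ := pi_div_one_add_abs_mem_Ioc hρ
  have hkernel : Tendsto (fun x ↦ hankelIntegral (π / (1 + |α|)) (wrightKernel α x (1 - β))) atTop
      (𝓝 (hankelIntegral (π / (1 + |α|)) 0)) := by
    refine tendsto_hankelIntegral_of_dominated (by positivity)
      (fun x ↦ continuous_wrightKernel α x (1 - β)) (continuous_wrightMajorant 0 0 (1 - β))
      (integrableOn_wrightMajorant 0 (1 - β) zero_lt_one hθ) ?_ fun w hw ↦ ?_
    · filter_upwards [eventually_ge_atTop 0] with x hx w hw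
      have hcos := cos_mul_pos hρ hw.2
      rw [norm_wrightKernel_eq_mul]
      exact mul_le_of_le_one_right (Real.exp_pos _).le (Real.exp_le_one_iff.2 (by
        rw [neg_nonpos]
        positivity))
    · have hcos := cos_mul_pos hρ hw.2
      have hexponent := tendsto_neg_atTop_atBot.comp <| tendsto_id.atTop_mul_const
        (mul_pos (Real.exp_pos (α * w.re)) hcos)
      have hexp := (Real.tendsto_exp_atBot.comp hexponent).const_mul (wrightMajorant 0 0 (1 - β) w)
      rw [mul_zero] at hexp
      exact tendsto_zero_iff_norm_tendsto_zero.2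
        (hexp.congr fun x ↦ (norm_wrightKernel_eq_mul α x (1 - β) w).symm)
  have hlim := (((Complex.continuous_im.tendsto _).comp hkernel).div_const π).comp
    tendsto_neg_atBot_atTop
  refine (hlim.congr fun x ↦ ?_).trans_eq ?_
  · simpa using (wright_eq_im_hankelIntegral (-x) β hα hθ).symm
  · simp [hankelIntegral]

end Representation

section SteepestDescent

lemma sinc_pos {t : ℝ} (ht : t ∈ Ico 0 π) : 0 < Real.sinc t := by
  rcases ht.1.eq_or_lt with rfl | ht0
  · simp
  · rw [Real.sinc_of_ne_zero ht0.ne']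
    exact div_pos (Real.sin_pos_of_pos_of_lt_pi ht0 ht.2) ht0

lemma mul_sinc (t : ℝ) : t * Real.sinc t = Real.sin t := by
  rcases eq_or_ne t 0 with rfl | ht
  · simp
  · rw [Real.sinc_of_ne_zero ht, mul_div_cancel₀ _ ht]

lemma differentiableAt_sinc {t : ℝ} (ht : t ≠ 0) : DifferentiableAt ℝ Real.sinc t := by
  rw [Real.sinc_eq_dslope, differentiableAt_dslope_of_ne ht]
  exact Real.differentiableAt_sin

/-- The real part of the point at height `t` of the steepest descent curve of
`wrightPhase α x`. The equation `im (wrightPhase α x w) = 0` of the curve reads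
`exp ((1 - α) re w) = x sin (α t) / sin t`; writing the right-hand side with `sinc` extends it
to `t = 0`. -/
noncomputable def descentAbscissa (α x t : ℝ) : ℝ :=
  Real.log (x * α * Real.sinc (α * t) / Real.sinc t) / (1 - α)

/-- The steepest descent curve of `wrightPhase α x`, which leaves the real axis at the saddle
point and on which the phase is real. -/
noncomputable def descentCurve (α x t : ℝ) : ℂ := descentAbscissa α x t + t * I

/-- The primitive of `-(1 / b) * (wrightPhase α x)' * wrightKernel α x b` obtained from that of
`wrightKernel α x b` by an integration by parts. On the steepest descent curve its derivative has
a sign. -/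
noncomputable def wrightPotential (α x b : ℝ) (w : ℂ) : ℂ :=
  wedgeIntegral 0 w (wrightKernel α x b) - wrightKernel α x b w / b

variable {α x b t : ℝ}

lemma mul_mem_Ico_zero_pi (hα : α ∈ Ioo 0 1) (ht : t ∈ Icc 0 π) : α * t ∈ Ico 0 π :=
  ⟨mul_nonneg hα.1.le ht.1, by nlinarith [hα.2, ht.2, hα.1, Real.pi_pos]⟩

lemma descent_ratio_pos (hα : α ∈ Ioo 0 1) (hx : 0 < x) (ht : t ∈ Ico 0 π) :
    0 < x * α * Real.sinc (α * t) / Real.sinc t :=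
  div_pos (mul_pos (mul_pos hx hα.1) (sinc_pos (mul_mem_Ico_zero_pi hα (Ico_subset_Icc_self ht))))
    (sinc_pos ht)

lemma exp_descentAbscissa_mul_sin (hα : α ∈ Ioo 0 1) (hx : 0 < x) (ht : t ∈ Ico 0 π) :
    Real.exp (descentAbscissa α x t) * Real.sin t
      = x * (Real.exp (α * descentAbscissa α x t) * Real.sin (α * t)) := by
  have hlog : descentAbscissa α x t
      = α * descentAbscissa α x t + Real.log (x * α * Real.sinc (α * t) / Real.sinc t) := by
    have hα1 : 1 - α ≠ 0 := by linarith [hα.2]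
    unfold descentAbscissa
    field_simp
    ring
  have hsinc := (sinc_pos ht).ne'
  nth_rw 1 [hlog]
  rw [Real.exp_add, Real.exp_log (descent_ratio_pos hα hx ht), ← mul_sinc t, ← mul_sinc (α * t)]
  field_simp

lemma im_wrightPhase_descentCurve (hα : α ∈ Ioo 0 1) (hx : 0 < x) (ht : t ∈ Ico 0 π) :
    (wrightPhase α x (descentCurve α x t)).im = 0 := by
  rw [im_wrightPhase]
  simpa [descentCurve, sub_eq_zero] using exp_descentAbscissa_mul_sin hα hx ht

lemma wrightKernel_descentCurve (hα : α ∈ Ioo 0 1) (hx : 0 < x) (ht : t ∈ Ico 0 π) :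
    wrightKernel α x b (descentCurve α x t)
      = (‖wrightKernel α x b (descentCurve α x t)‖ : ℂ) * Complex.exp ((b * t : ℝ) * I) := by
  have hreal : wrightPhase α x (descentCurve α x t)
      = ((wrightPhase α x (descentCurve α x t)).re : ℂ) :=
    Complex.ext rfl (im_wrightPhase_descentCurve hα hx ht)
  rw [norm_wrightKernel, wrightKernel, hreal, Complex.ofReal_exp, ← Complex.exp_add]
  simp [descentCurve]
  ring_nf

lemma im_wrightKernel_descentCurve (hα : α ∈ Ioo 0 1) (hx : 0 < x) (ht : t ∈ Ico 0 π) :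
    (wrightKernel α x b (descentCurve α x t)).im
      = ‖wrightKernel α x b (descentCurve α x t)‖ * Real.sin (b * t) := by
  rw [wrightKernel_descentCurve hα hx ht, Complex.im_ofReal_mul, Complex.exp_ofReal_mul_I_im,
    ← wrightKernel_descentCurve hα hx ht]

lemma continuousOn_descentCurve (hα : α ∈ Ioo 0 1) (hx : 0 < x) :
    ContinuousOn (descentCurve α x) (Ico 0 π) := by
  have hratio : ContinuousOn (fun t ↦ x * α * Real.sinc (α * t) / Real.sinc t) (Ico 0 π) :=
    (Continuous.continuousOn (by fun_prop [Real.continuous_sinc])).div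
      Real.continuous_sinc.continuousOn fun t ht ↦ (sinc_pos ht).ne'
  have habscissa : ContinuousOn (descentAbscissa α x) (Ico 0 π) :=
    (hratio.log fun t ht ↦ (descent_ratio_pos hα hx ht).ne').div_const _
  exact (Complex.continuous_ofReal.comp_continuousOn habscissa).add
    (Continuous.continuousOn (by fun_prop))

lemma tendsto_descentAbscissa_pi (hα : α ∈ Ioo 0 1) (hx : 0 < x) :
    Tendsto (descentAbscissa α x) (𝓝[<] π) atTop := by
  have hnum : Tendsto (fun t ↦ x * α * Real.sinc (α * t)) (𝓝[<] π)
      (𝓝 (x * α * Real.sinc (α * π))) :=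
    (Continuous.continuousWithinAt (by fun_prop [Real.continuous_sinc]))
  have hnum_pos : 0 < x * α * Real.sinc (α * π) :=
    mul_pos (mul_pos hx hα.1) (sinc_pos (mul_mem_Ico_zero_pi hα (right_mem_Icc.2 Real.pi_pos.le)))
  have hden : Tendsto Real.sinc (𝓝[<] π) (𝓝[>] 0) := by
    refine tendsto_nhdsWithin_iff.2 ⟨?_, ?_⟩
    · simpa [Real.sinc_of_ne_zero Real.pi_ne_zero] using
        Real.continuous_sinc.continuousWithinAt (s := Iio π) (x := π) |>.tendsto
    · filter_upwards [Ico_mem_nhdsLT Real.pi_pos] with t ht using sinc_pos ht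
  have hratio := hnum.pos_mul_atTop hnum_pos (tendsto_inv_nhdsGT_zero.comp hden)
  exact (Real.tendsto_log_atTop.comp hratio).atTop_div_const (sub_pos.2 hα.2)

lemma hasDerivAt_descentCurve (hα : α ∈ Ioo 0 1) (hx : 0 < x) (ht : t ∈ Ioo 0 π) :
    HasDerivAt (descentCurve α x) (deriv (descentAbscissa α x) t + I) t := by
  have hsinc := differentiableAt_sinc ht.1.ne'
  have hsinc_mul : DifferentiableAt ℝ (fun t ↦ Real.sinc (α * t)) t :=
    (differentiableAt_sinc (mul_pos hα.1 ht.1).ne').fun_comp' t (by fun_prop)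
  have hratio := descent_ratio_pos hα hx (Ioo_subset_Ico_self ht)
  have habscissa : DifferentiableAt ℝ (descentAbscissa α x) t :=
    (((hsinc_mul.const_mul (x * α)).div hsinc (sinc_pos (Ioo_subset_Ico_self ht)).ne').log
      hratio.ne').div_const _
  exact (habscissa.hasDerivAt.ofReal_comp.add
    ((Complex.ofRealCLM.hasDerivAt (x := t)).mul_const I)).congr_deriv (by simp)

lemma im_deriv_wrightPhase_descentCurve_pos (hα : α ∈ Ioo 0 1) (hx : 0 < x) (ht : t ∈ Ioo 0 π) :
    0 < (deriv (wrightPhase α x) (descentCurve α x t)).im := by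
  have hcurve := exp_descentAbscissa_mul_sin hα hx (Ioo_subset_Ico_self ht)
  have him : (deriv (wrightPhase α x) (descentCurve α x t)).im
      = (1 - α) * (Real.exp (descentAbscissa α x t) * Real.sin t) := by
    rw [(hasDerivAt_wrightPhase α x _).deriv]
    simp [descentCurve, Complex.exp_im]
    linear_combination α * hcurve
  rw [him]
  exact mul_pos (sub_pos.2 hα.2)
    (mul_pos (Real.exp_pos _) (Real.sin_pos_of_pos_of_lt_pi ht.1 ht.2))

lemma re_mul_neg_of_im_mul_eq_zero {p v : ℂ} (hp : 0 < p.im) (hv : v.im = 1)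
    (hpv : (p * v).im = 0) : (p * v).re < 0 := by
  rw [Complex.mul_im, hv] at hpv
  rw [Complex.mul_re, hv]
  have hre : p.re * v.re - p.im * 1 = -(p.im * (v.re ^ 2 + 1)) := by
    linear_combination v.re * hpv
  rw [hre]
  exact neg_neg_of_pos (by positivity)

/- The phase is real on the curve, so its derivative along the curve is real; as the curve is
transverse to the horizontals, this fixes the sign of the derivative. -/
lemma exists_neg_deriv_wrightPhase_mul_tangent_eq (hα : α ∈ Ioo 0 1) (hx : 0 < x)
    (ht : t ∈ Ioo 0 π) : ∃ r : ℝ, r < 0 ∧ deriv (wrightPhase α x) (descentCurve α x t)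
      * (deriv (descentAbscissa α x) t + I) = r := by
  have hphase := hasDerivAt_im <|
    (hasDerivAt_wrightPhase α x (descentCurve α x t)).comp t (hasDerivAt_descentCurve hα hx ht)
  rw [← (hasDerivAt_wrightPhase α x _).deriv] at hphase
  have hzero : (fun s ↦ (wrightPhase α x (descentCurve α x s)).im) =ᶠ[𝓝 t] fun _ ↦ 0 := by
    filter_upwards [Ico_mem_nhds ht.1 ht.2] with s hs using im_wrightPhase_descentCurve hα hx hs
  have him := hphase.unique ((hasDerivAt_const t (0 : ℝ)).congr_of_eventuallyEq hzero)
  exact ⟨_, re_mul_neg_of_im_mul_eq_zero (im_deriv_wrightPhase_descentCurve_pos hα hx ht)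
    (by simp) him, Complex.ext rfl him⟩

lemma hasDerivAt_wrightPotential (hb : b ≠ 0) (w : ℂ) : HasDerivAt (wrightPotential α x b)
    (((-1 / b : ℝ) : ℂ) * (deriv (wrightPhase α x) w * wrightKernel α x b w)) w := by
  have hbC : (b : ℂ) ≠ 0 := by exact_mod_cast hb
  refine ((hasDerivAt_wedgeIntegral_zero (differentiable_wrightKernel α x b) w).sub
    ((hasDerivAt_wrightKernel α x b w).div_const (b : ℂ))).congr_deriv ?_
  rw [(hasDerivAt_wrightPhase α x w).deriv]
  push_cast
  field_simp
  ring

lemma im_wrightPotential_ofReal (α x b r : ℝ) : (wrightPotential α x b r).im = 0 := by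
  simp [wrightPotential, im_wedgeIntegral_zero_ofReal (im_wrightKernel_ofReal α x b),
    Complex.div_ofReal_im, im_wrightKernel_ofReal]

lemma sin_mul_pos (hb : b ∈ Ioc 0 1) (ht : t ∈ Ioo 0 π) : 0 < Real.sin (b * t) :=
  Real.sin_pos_of_mem_Ioo ⟨mul_pos hb.1 ht.1, (mul_le_of_le_one_left ht.1.le hb.2).trans_lt ht.2⟩

lemma strictMonoOn_im_wrightPotential (hα : α ∈ Ioo 0 1) (hx : 0 < x) (hb : b ∈ Ioc 0 1) :
    StrictMonoOn (fun t ↦ (wrightPotential α x b (descentCurve α x t)).im) (Ico 0 π) := by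
  have hb0 : b ≠ 0 := hb.1.ne'
  have hcont : Continuous (wrightPotential α x b) :=
    continuous_iff_continuousAt.2 fun w ↦ (hasDerivAt_wrightPotential hb0 w).continuousAt
  refine strictMonoOn_of_deriv_pos (convex_Ico 0 π) (Complex.continuous_im.comp_continuousOn
    (hcont.comp_continuousOn (continuousOn_descentCurve hα hx))) fun t ht ↦ ?_
  rw [interior_Ico] at ht
  obtain ⟨r, hr, hphase⟩ := exists_neg_deriv_wrightPhase_mul_tangent_eq hα hx ht
  have hderiv := hasDerivAt_im <|
    (hasDerivAt_wrightPotential (α := α) (x := x) hb0 _).comp t (hasDerivAt_descentCurve hα hx ht)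
  have hvalue : ((-1 / b : ℝ) : ℂ) * (deriv (wrightPhase α x) (descentCurve α x t)
      * wrightKernel α x b (descentCurve α x t)) * (deriv (descentAbscissa α x) t + I)
      = ((-r / b : ℝ) : ℂ) * wrightKernel α x b (descentCurve α x t) := by
    push_cast
    linear_combination (-1 / b * wrightKernel α x b (descentCurve α x t)) * hphase
  rw [hvalue, Complex.im_ofReal_mul, im_wrightKernel_descentCurve hα hx (Ioo_subset_Ico_self ht)]
    at hderiv
  have hnorm : 0 < ‖wrightKernel α x b (descentCurve α x t)‖ :=
    norm_pos_iff.2 (Complex.exp_ne_zero _)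
  refine hderiv.deriv.symm ▸ ?_
  exact mul_pos (div_pos (neg_pos.2 hr) hb.1) (mul_pos hnorm (sin_mul_pos hb ht))

lemma im_wrightPotential_le_im_wedgeIntegral (hα : α ∈ Ioo 0 1) (hx : 0 < x) (hb : b ∈ Ioc 0 1)
    (ht : t ∈ Ioo 0 π) : (wrightPotential α x b (descentCurve α x t)).im
      ≤ (wedgeIntegral 0 (descentCurve α x t) (wrightKernel α x b)).im := by
  rw [wrightPotential, Complex.sub_im, Complex.div_ofReal_im,
    im_wrightKernel_descentCurve hα hx (Ioo_subset_Ico_self ht)]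
  have hsin := sin_mul_pos hb ht
  have hb0 := hb.1
  exact sub_le_self _ (by positivity)

theorem im_hankelIntegral_wrightKernel_pos {θ : ℝ} (hα : α ∈ Ioo 0 1) (hx : 0 < x)
    (hb : b ∈ Ioc 0 1) (hθ : θ ∈ Ioo (π / 2) π) :
    0 < (hankelIntegral θ (wrightKernel α x b)).im := by
  have hmono := strictMonoOn_im_wrightPotential hα hx hb
  have hθ0 : 0 < θ := by linarith [hθ.1, Real.pi_pos]
  have hpos : 0 < (wrightPotential α x b (descentCurve α x θ)).im := by
    have hstart : (wrightPotential α x b (descentCurve α x 0)).im = 0 := by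
      simpa [descentCurve] using im_wrightPotential_ofReal α x b (descentAbscissa α x 0)
    rw [← hstart]
    exact hmono (left_mem_Ico.2 Real.pi_pos) ⟨hθ0.le, hθ.2⟩ hθ0
  have hmem : ∀ᶠ t in 𝓝[<] π, t ∈ Ioo θ π := Ioo_mem_nhdsLT hθ.2
  have hlim := (Complex.continuous_im.tendsto _).comp <| tendsto_wedgeIntegral_wrightKernel x b
    hα.2 (Ioo_subset_Ioc_self hθ) (tendsto_descentAbscissa_pi hα hx)
    (hmem.mono fun t ht ↦ Ioo_subset_Icc_self ht)
  refine hpos.trans_le (ge_of_tendsto hlim (hmem.mono fun t ht ↦ ?_))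
  have ht0 : t ∈ Ioo 0 π := ⟨hθ0.trans ht.1, ht.2⟩
  exact (hmono ⟨hθ0.le, hθ.2⟩ (Ioo_subset_Ico_self ht0) ht.1).le.trans
    (im_wrightPotential_le_im_wedgeIntegral hα hx hb ht0)

end SteepestDescent

section Positivity

variable {α β : ℝ}

lemma wright_neg_pos_of_mem_Ico {x : ℝ} (hα : α ∈ Ioo 0 1) (hβ : β ∈ Ico 0 1) (hx : 0 < x) :
    0 < wright (-α) β (-x) := by
  have hθ : π / (1 + α) ∈ Ioo (π / 2) π :=
    ⟨by have := hα.1; gcongr; linarith [hα.2], div_lt_self Real.pi_pos (by linarith [hα.1])⟩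
  rw [wright_eq_im_hankelIntegral x β hα.2 (Ioo_subset_Ioc_self hθ)]
  exact div_pos (im_hankelIntegral_wrightKernel_pos hα hx
    ⟨sub_pos.2 hβ.2, sub_le_self 1 hβ.1⟩ hθ) Real.pi_pos

lemma tendsto_wright_neg_atTop (β : ℝ) (hα : α ∈ Ioo 0 1) :
    Tendsto (fun x ↦ wright (-α) β (-x)) atTop (𝓝 0) :=
  (tendsto_wright_atBot β (by rw [abs_neg, abs_of_pos hα.1]; exact hα.2)).comp
    tendsto_neg_atTop_atBot

lemma hasDerivAt_wright_neg (β x : ℝ) (hα : α < 1) :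
    HasDerivAt (fun x ↦ wright (-α) β (-x)) (-wright (-α) (β - α) (-x)) x :=
  ((hasDerivAt_wright (-x) β (neg_lt_neg hα)).comp x (hasDerivAt_neg x)).congr_deriv
    (by rw [mul_neg_one, sub_eq_add_neg])

lemma pos_of_strictAntiOn_Ici_of_tendsto_zero {f : ℝ → ℝ} {a : ℝ} (hf : StrictAntiOn f (Ici a))
    (hlim : Tendsto f atTop (𝓝 0)) {x : ℝ} (hx : a ≤ x) : 0 < f x := by
  have hx1 : x < x + 1 := lt_add_one x
  refine lt_of_le_of_lt (le_of_tendsto hlim ?_) (hf hx (hx.trans hx1.le) hx1)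
  filter_upwards [eventually_ge_atTop (x + 1)] with y hy
  exact hf.antitoneOn (hx.trans hx1.le) (hx.trans (hx1.le.trans hy)) hy

lemma wright_neg_pos_of_sub (hα : α ∈ Ioo 0 1)
    (hpos : ∀ x, 0 < x → 0 < wright (-α) (β - α) (-x)) {x : ℝ} (hx : 0 < x) :
    0 < wright (-α) β (-x) := by
  refine pos_of_strictAntiOn_Ici_of_tendsto_zero (f := fun x ↦ wright (-α) β (-x))
    (strictAntiOn_of_deriv_neg (convex_Ici 0) (fun y _ ↦
      (hasDerivAt_wright_neg β y hα.2).continuousAt.continuousWithinAt) fun y hy ↦ ?_)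
    (tendsto_wright_neg_atTop β hα) hx.le
  rw [interior_Ici] at hy
  rw [(hasDerivAt_wright_neg β y hα.2).deriv]
  exact neg_neg_of_pos (hpos y hy)

theorem wright_neg_pos (hα : α ∈ Ioo 0 1) (hβ : 0 ≤ β) {x : ℝ} (hx : 0 < x) :
    0 < wright (-α) β (-x) := by
  obtain ⟨n, hn⟩ := exists_nat_gt ((β - 1) / α)
  rw [div_lt_iff₀ hα.1] at hn
  induction n generalizing β x with
  | zero => exact wright_neg_pos_of_mem_Ico hα ⟨hβ, by simpa using hn⟩ hx
  | succ n ih =>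
    rcases lt_or_ge β 1 with hβ1 | hβ1
    · exact wright_neg_pos_of_mem_Ico hα ⟨hβ, hβ1⟩ hx
    · refine wright_neg_pos_of_sub hα (fun y hy ↦ ih (by linarith [hα.2]) hy ?_) hx
      push_cast at hn
      linarith

end Positivity

/-- For `α ∈ (0,1)` and `β ≥ 0` the function `x ↦ φ(-α, β, -x)` is positive on
`(0,∞)`, integrable there, with total integral `1/Γ(α+β)`; consequently
`Γ(α+β)·φ(-α,β,-x)` is a probability density on `(0,∞)`. -/
theorem wright_probability_density (α β : ℝ) (hα : α ∈ Set.Ioo (0 : ℝ) 1) (hβ : 0 ≤ β) :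
    (∀ x : ℝ, 0 < x → 0 < wright (-α) β (-x)) ∧
    IntegrableOn (fun x => wright (-α) β (-x)) (Set.Ioi 0) ∧
    (∫ x in Set.Ioi 0, wright (-α) β (-x)) = 1 / Real.Gamma (α + β) ∧
    (∫ x in Set.Ioi 0, Real.Gamma (α + β) * wright (-α) β (-x)) = 1 := by
  have hpos (x : ℝ) (hx : 0 < x) : 0 < wright (-α) β (-x) := wright_neg_pos hα hβ hx
  have hderiv (x : ℝ) :
      HasDerivAt (fun x ↦ -wright (-α) (α + β) (-x)) (wright (-α) β (-x)) x :=
    (hasDerivAt_wright_neg (α + β) x hα.2).neg.congr_deriv (by simp)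
  have hlim : Tendsto (fun x ↦ -wright (-α) (α + β) (-x)) atTop (𝓝 0) := by
    simpa using (tendsto_wright_neg_atTop (α + β) hα).neg
  have hint : (∫ x in Ioi 0, wright (-α) β (-x)) = 1 / Real.Gamma (α + β) := by
    rw [integral_Ioi_of_hasDerivAt_of_nonneg' (fun x _ ↦ hderiv x) (fun x hx ↦ (hpos x hx).le) hlim]
    simp [wright_zero_right]
  refine ⟨hpos, integrableOn_Ioi_deriv_of_nonneg' (fun x _ ↦ hderiv x)
    (fun x hx ↦ (hpos x hx).le) hlim, hint, ?_⟩
  rw [integral_const_mul, hint]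
  exact mul_one_div_cancel (Real.Gamma_pos_of_pos (add_pos_of_pos_of_nonneg hα.1 hβ)).ne'
end
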